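/- arXiv:1706.08030 — 10 statements merged into one kernel-verified Lean document; each statement's English description precedes it below -/
import Mathlib

section
/- Let A ∈ ℝ^{m×N} with m ≤ N and let s be a natural number with 2s ≤ N. Then the following are equivalent: (i) for every x ∈ ℝ^N with ‖x‖₀ ≤ s, x is the unique vector z ∈ ℝ^N satisfying ‖z‖₀ ≤ s and Az = Ax; (ii) every v ∈ ℝ^N with Av = 0 and ‖v‖₀ ≤ 2s is the zero vector (equivalently, for every T ⊆ {1,…,N} with |T| = 2s the submatrix A_T has full column rank, i.e., A_T is injective). -/
/-! The difference of two `s`-sparse vectors is `2s`-sparse, so a kernel without nonzero `2s`-sparse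
vectors forces uniqueness. Conversely, a `2s`-sparse kernel vector `v` splits along a set `U` of
`min s ‖v‖₀` indices of its support as `v = x - z`, where `x` is `v` restricted to `U` and `z` is
`-v` restricted to the complement. Both are `s`-sparse with `A x = A z`, so `x = z`; their
supports are disjoint, so `v = 0`. -/

open Matrix Finset

/-- `‖x‖₀`: the number of nonzero entries of `x`. -/
noncomputable def l0 {N : ℕ} (x : Fin N → ℝ) : ℕ := (Finset.univ.filter fun i => x i ≠ 0).card

/-- Uniqueness of `s`-sparse recovery for all `s`-sparse vectors is equivalent to the
absence of nonzero `2s`-sparse vectors in the kernel of `A`. -/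
theorem stmt0 (m N s : ℕ) (hmN : m ≤ N) (hsN : 2 * s ≤ N)
    (A : Matrix (Fin m) (Fin N) ℝ) :
    (∀ x : Fin N → ℝ, l0 x ≤ s →
      ∀ z : Fin N → ℝ, l0 z ≤ s → A.mulVec z = A.mulVec x → z = x) ↔
    (∀ v : Fin N → ℝ, A.mulVec v = 0 → l0 v ≤ 2 * s → v = 0) := by
  constructor
  · intro h v hv hs
    obtain ⟨U, hU, hUc⟩ := Finset.exists_subset_card_eq
      (s := Finset.univ.filter fun i => v i ≠ 0) (n := min s (l0 v)) (min_le_right _ _)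
    have key := h (fun i => if i ∈ U then v i else 0) ?_ (fun i => if i ∈ U then 0 else -v i) ?_ ?_
    · funext i
      have hi := congrFun key i
      by_cases hiU : i ∈ U
      · simpa [hiU] using hi.symm
      · simpa [hiU] using hi
    · refine le_trans (Finset.card_le_card (t := U) ?_) (hUc.trans_le (min_le_left _ _))
      intro i hi
      by_contra hiU
      simp [hiU] at hi
    · refine le_trans (Finset.card_le_card
        (t := (Finset.univ.filter fun i => v i ≠ 0) \ U) ?_) ?_
      · intro i hi
        by_cases hiU : i ∈ U
        · simp [hiU] at hi
        · simpa [hiU] using hi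
      · rw [Finset.card_sdiff_of_subset hU, hUc]
        change l0 v - _ ≤ s
        omega
    · rw [eq_comm, ← sub_eq_zero, ← Matrix.mulVec_sub]
      convert hv using 2
      funext i
      by_cases hiU : i ∈ U <;> simp [hiU]
  · intro h x hx z hz hzx
    refine sub_eq_zero.mp (h (z - x) (by rw [Matrix.mulVec_sub, hzx, sub_self]) ?_)
    have hsub : l0 (z - x) ≤ l0 z + l0 x := by
      refine le_trans (Finset.card_le_card ?_) (Finset.card_union_le _ _)
      intro i hi
      simp only [Finset.mem_filter, Finset.mem_union, Finset.mem_univ, true_and,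
        Pi.sub_apply] at hi ⊢
      by_contra! hc
      exact hi (by rw [hc.1, hc.2, sub_self])
    omega
end

section
/- Let A ∈ ℝ^{m×N} satisfy: for every index set T ⊆ {1,…,N} with |T| ≤ m, the submatrix A_T is injective. Let s, m satisfy s < m < 2s. Fix index sets S', S'' ⊆ {1,…,N} with |S'| ≤ s and |S''| ≤ s, and define Φ(S',S'') = { x' ∈ ℝ^N : supp(x') = S' and there exists x'' ≠ x' with supp(x'') = S'' and A(x' − x'') = 0 }. Then Φ(S',S'') is contained in a linear subspace of ℝ^N of dimension at most |S'| + |S''| − m ≤ 2s − m < s. -/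
/-!
Every `x' ∈ Φ(S', S'')` is the first component of a pair `(x', x'')` in the linear space
`pairSpace A S' S''` of pairs supported in `S'` and `S''` with equal images under `A`, so `W` can
be taken as the projection of that space. Put `U = S' ∪ S''` and `I = S' ∩ S''`.

If `|U| ≤ m`, injectivity of `A_U` forces `x' = x''`, so `Φ` is empty. Otherwise choose `T ⊆ U` with
`|T| = m`. A pair `(x, y)` is determined by `x` on `I` together with `x - y` on `U \ T`: if both
vanish, then `x - y` is a kernel vector supported in `T`, so `x = y` is supported in `I`, hence zero.
This bounds the dimension by `|I| + |U| - m = |S'| + |S''| - m`.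
-/

open Matrix Finset

/-- The support of a vector, as a `Finset`. -/
noncomputable def suppF {N : ℕ} (x : Fin N → ℝ) : Finset (Fin N) :=
  Finset.univ.filter fun i => x i ≠ 0

/-- `A_T` has full column rank: the only vector supported in `T` mapped to zero by `A`
is the zero vector. -/
def colsInj {m N : ℕ} (A : Matrix (Fin m) (Fin N) ℝ) (T : Finset (Fin N)) : Prop :=
  ∀ v : Fin N → ℝ, (∀ i, i ∉ T → v i = 0) → A.mulVec v = 0 → v = 0

/-- Pairs `(x, y)` with `x` supported in `S'`, `y` supported in `S''` and `A x = A y`. -/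
def pairSpace {m N : ℕ} (A : Matrix (Fin m) (Fin N) ℝ) (S' S'' : Finset (Fin N)) :
    Submodule ℝ ((Fin N → ℝ) × (Fin N → ℝ)) where
  carrier := {p | (∀ i, i ∉ S' → p.1 i = 0) ∧ (∀ i, i ∉ S'' → p.2 i = 0) ∧
    A.mulVec (p.1 - p.2) = 0}
  add_mem' := by
    rintro ⟨a, b⟩ ⟨c, d⟩ ⟨h1, h2, h3⟩ ⟨k1, k2, k3⟩
    refine ⟨fun i hi => ?_, fun i hi => ?_, ?_⟩
    · simp [show a i = 0 from h1 i hi, show c i = 0 from k1 i hi]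
    · simp [show b i = 0 from h2 i hi, show d i = 0 from k2 i hi]
    · have : (a + c) - (b + d) = (a - b) + (c - d) := by abel
      simp only [Prod.mk_add_mk, this, Matrix.mulVec_add]
      simp only at h3 k3
      rw [h3, k3, add_zero]
  zero_mem' := by simp
  smul_mem' := by
    rintro r ⟨a, b⟩ ⟨h1, h2, h3⟩
    refine ⟨fun i hi => ?_, fun i hi => ?_, ?_⟩
    · simp [show a i = 0 from h1 i hi]
    · simp [show b i = 0 from h2 i hi]
    · simp only at h3
      simp only [Prod.smul_mk, ← smul_sub, Matrix.mulVec_smul, h3, smul_zero]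

/-- The coordinates of `x` on `I` and of `x - y` on `R`, as a linear function of `(x, y)`. -/
def coordMap {N : ℕ} (I R : Finset (Fin N)) :
    ((Fin N → ℝ) × (Fin N → ℝ)) →ₗ[ℝ] (I → ℝ) × (R → ℝ) where
  toFun p := (fun i => p.1 i, fun i => p.1 i - p.2 i)
  map_add' p q := by
    ext i
    · simp
    · simp only [Prod.fst_add, Prod.snd_add, Pi.add_apply]; ring
  map_smul' r p := by
    ext i
    · simp
    · simp [mul_sub]

lemma finrank_pairSpace_le {m N : ℕ} (A : Matrix (Fin m) (Fin N) ℝ) (S' S'' T : Finset (Fin N))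
    (hT : T ⊆ S' ∪ S'') (hinj : colsInj A T) :
    Module.finrank ℝ (pairSpace A S' S'') ≤ S'.card + S''.card - T.card := by
  have hker : Function.Injective
      ((coordMap (S' ∩ S'') ((S' ∪ S'') \ T)).comp (pairSpace A S' S'').subtype) := by
    rw [← LinearMap.ker_eq_bot, LinearMap.ker_eq_bot']
    rintro ⟨⟨x, y⟩, hx, hy, hA⟩ h
    simp only at hx hy hA
    have hI : ∀ i ∈ S' ∩ S'', x i = 0 := fun i hi => congrFun (congrArg Prod.fst h) ⟨i, hi⟩
    have hR : ∀ i ∈ (S' ∪ S'') \ T, x i - y i = 0 :=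
      fun i hi => congrFun (congrArg Prod.snd h) ⟨i, hi⟩
    have hxy : x - y = 0 := by
      refine hinj _ (fun i hi => ?_) hA
      by_cases hU : i ∈ S' ∪ S''
      · exact hR i (Finset.mem_sdiff.2 ⟨hU, hi⟩)
      · rw [Finset.mem_union, not_or] at hU
        simp [hx i hU.1, hy i hU.2]
    have hxy' : x = y := sub_eq_zero.1 hxy
    subst hxy'
    have hx0 : x = 0 := by
      funext i
      by_cases h1 : i ∈ S'
      · by_cases h2 : i ∈ S''
        · exact hI i (Finset.mem_inter.2 ⟨h1, h2⟩)
        · exact hy i h2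
      · exact hx i h1
    subst hx0
    rfl
  have hle := LinearMap.finrank_le_finrank_of_injective hker
  rw [Module.finrank_prod, Module.finrank_fintype_fun_eq_card,
    Module.finrank_fintype_fun_eq_card, Fintype.card_coe, Fintype.card_coe,
    Finset.card_sdiff_of_subset hT] at hle
  have h1 := Finset.card_union_add_card_inter S' S''
  have h2 := Finset.card_le_card hT
  omega

/-- For `s < m < 2s`, the set `Φ(S', S'')` of vectors with support `S'` for which there
is a different vector with support `S''` and the same image under `A` is contained in a
linear subspace of dimension at most `|S'| + |S''| - m ≤ 2s - m < s`. -/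
theorem stmt3 (m N s : ℕ) (A : Matrix (Fin m) (Fin N) ℝ)
    (hinj : ∀ T : Finset (Fin N), T.card ≤ m → colsInj A T)
    (hsm : s < m) (hms : m < 2 * s)
    (S' S'' : Finset (Fin N)) (hS' : S'.card ≤ s) (hS'' : S''.card ≤ s) :
    ∃ W : Submodule ℝ (Fin N → ℝ),
      ({x' : Fin N → ℝ | suppF x' = S' ∧
          ∃ x'' : Fin N → ℝ, x'' ≠ x' ∧ suppF x'' = S'' ∧ A.mulVec (x' - x'') = 0}
        ⊆ (W : Set (Fin N → ℝ))) ∧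
      Module.finrank ℝ W ≤ S'.card + S''.card - m ∧
      S'.card + S''.card - m ≤ 2 * s - m ∧ 2 * s - m < s := by
  have off : ∀ {x : Fin N → ℝ} {S : Finset (Fin N)}, suppF x = S → ∀ i, i ∉ S → x i = 0 := by
    rintro x _ rfl i hi
    simpa [suppF] using hi
  suffices h : ∃ W : Submodule ℝ (Fin N → ℝ),
      ({x' : Fin N → ℝ | suppF x' = S' ∧
          ∃ x'' : Fin N → ℝ, x'' ≠ x' ∧ suppF x'' = S'' ∧ A.mulVec (x' - x'') = 0}
        ⊆ (W : Set (Fin N → ℝ))) ∧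
      Module.finrank ℝ W ≤ S'.card + S''.card - m by
    obtain ⟨W, h1, h2⟩ := h
    exact ⟨W, h1, h2, by omega, by omega⟩
  rcases le_total (S' ∪ S'').card m with hU | hU
  · -- Here the set is empty; the truncated difference may be `0`, so `⊥` is the safe choice.
    refine ⟨⊥, ?_, by simp⟩
    rintro x ⟨hx, y, hne, hy, hA⟩
    have hxy : x - y = 0 := by
      refine hinj _ hU _ (fun i hi => ?_) hA
      rw [Finset.mem_union, not_or] at hi
      simp [off hx i hi.1, off hy i hi.2]
    exact absurd (sub_eq_zero.1 hxy).symm hne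
  · obtain ⟨T, hT, hcard⟩ := Finset.exists_subset_card_eq hU
    refine ⟨(pairSpace A S' S'').map (LinearMap.fst ℝ _ _), ?_, ?_⟩
    · rintro x ⟨hx, y, -, hy, hA⟩
      exact ⟨(x, y), ⟨off hx, off hy, hA⟩, rfl⟩
    · have h := finrank_pairSpace_le A S' S'' T hT (hinj T hcard.le)
      rw [hcard] at h
      exact (Submodule.finrank_map_le _ _).trans h
end

section
/- Let A ∈ ℝ^{m×N} satisfy: for every index set T ⊆ {1,…,N} with |T| ≤ m, the submatrix A_T is injective. Let s, m satisfy s < m < 2s. Define the non-uniqueness set Φ = { x ∈ ℝ^N : ‖x‖₀ ≤ s and there exists z ≠ x with ‖z‖₀ ≤ s and Az = Ax }. Then Φ is contained in a finite union of linear subspaces of ℝ^N, each of dimension at most 2s − m (which is strictly less than s). -/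
/-!
If `x ≠ z` are `s`-sparse with supports `S`, `S'` and `A x = A z`, then `x - z` is a nonzero kernel
vector supported in `S ∪ S'`, so the hypothesis on `A` forces `m < |S ∪ S'|`. Hence `x` lies in
`coincidence A S S'`, the space of vectors supported in `S` whose image is also the image of a
vector supported in `S'`, for one of the finitely many pairs with `m ≤ |S ∪ S'|`. As `A` is
injective on vectors supported in `S`, this space has the dimension of the intersection of the
column spaces of `A_S` and `A_{S'}`; these have dimension at most `s` each, and their sum has
dimension at least `m` because it contains `m` independent columns. The dimension formula
gives the bound `2s - m` (`finrank_coincidence_le`).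
-/

open Matrix Finset

/-- The vectors supported in `S` whose image under `A` is also the image of some vector
supported in `S'`. -/
noncomputable def coincidence {m N : ℕ} (A : Matrix (Fin m) (Fin N) ℝ) (S S' : Finset (Fin N)) :
    Submodule ℝ (Fin N → ℝ) :=
  Pi.spanSubset ℝ (S : Set (Fin N)) ⊓
    ((Pi.spanSubset ℝ (S' : Set (Fin N))).map A.mulVecLin).comap A.mulVecLin

lemma finrank_le_finrank_map {m N : ℕ} (f : (Fin N → ℝ) →ₗ[ℝ] (Fin m → ℝ))
    (V : Submodule ℝ (Fin N → ℝ)) (hV : ∀ v ∈ V, f v = 0 → v = 0) :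
    Module.finrank ℝ V ≤ Module.finrank ℝ (V.map f) := by
  have hf : ∀ v ∈ V, f v ∈ V.map f := fun v hv => Submodule.mem_map_of_mem hv
  refine LinearMap.finrank_le_finrank_of_injective (f := f.restrict hf) ?_
  rw [injective_iff_map_eq_zero]
  rintro ⟨v, hv⟩ h
  exact Subtype.ext (hV v hv (congrArg Subtype.val h))

lemma finrank_coincidence_le {m N s : ℕ} (A : Matrix (Fin m) (Fin N) ℝ)
    (hinj : ∀ T : Finset (Fin N), T.card ≤ m → colsInj A T) (hsm : s < m)
    {S S' : Finset (Fin N)} (hS : S.card ≤ s) (hS' : S'.card ≤ s) (hU : m ≤ (S ∪ S').card) :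
    Module.finrank ℝ (coincidence A S S') ≤ 2 * s - m := by
  set f := A.mulVecLin
  have hker : ∀ T : Finset (Fin N), T.card ≤ m →
      ∀ v ∈ Pi.spanSubset ℝ (T : Set (Fin N)), f v = 0 → v = 0 := fun T hT v hv h =>
    hinj T hT v (fun i hi => Pi.mem_spanSubset_iff.mp hv i (by simpa using hi)) h
  have hdim : ∀ T : Finset (Fin N),
      Module.finrank ℝ (Pi.spanSubset ℝ (T : Set (Fin N))) = T.card := fun T => by
    rw [Pi.dim_spanSubset, Set.ncard_coe_finset]
  set M := (Pi.spanSubset ℝ (S : Set (Fin N))).map f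
  set M' := (Pi.spanSubset ℝ (S' : Set (Fin N))).map f
  have hM : Module.finrank ℝ M ≤ s :=
    (Submodule.finrank_map_le _ _).trans ((hdim S).trans_le hS)
  have hM' : Module.finrank ℝ M' ≤ s :=
    (Submodule.finrank_map_le _ _).trans ((hdim S').trans_le hS')
  have hinf : Module.finrank ℝ (coincidence A S S') ≤ Module.finrank ℝ ↥(M ⊓ M') := by
    refine (finrank_le_finrank_map f (coincidence A S S')
      fun v hv => hker S (hS.trans hsm.le) v hv.1).trans
      (Submodule.finrank_mono ?_)
    rintro _ ⟨v, hv, rfl⟩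
    exact ⟨Submodule.mem_map_of_mem hv.1, hv.2⟩
  have hsup : m ≤ Module.finrank ℝ ↥(M ⊔ M') := by
    obtain ⟨T, hTU, hT⟩ := Finset.exists_subset_card_eq hU
    calc m = Module.finrank ℝ (Pi.spanSubset ℝ (T : Set (Fin N))) := by rw [hdim, hT]
      _ ≤ _ := finrank_le_finrank_map f _ (hker T hT.le)
      _ ≤ _ := Submodule.finrank_mono ?_
    rw [← Submodule.map_sup]
    refine Submodule.map_mono ?_
    rw [Pi.spanSubset, Pi.spanSubset, Pi.spanSubset, ← Submodule.span_union, ← Set.image_union]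
    exact Submodule.span_mono (Set.image_mono (by exact_mod_cast hTU))
  have := Submodule.finrank_sup_add_finrank_inf_eq M M'
  omega

/-- For `s < m < 2s`, the non-uniqueness set `Φ` is contained in a finite union of
linear subspaces, each of dimension at most `2s - m` (which is strictly less than `s`). -/
theorem stmt4 (m N s : ℕ) (A : Matrix (Fin m) (Fin N) ℝ)
    (hinj : ∀ T : Finset (Fin N), T.card ≤ m → colsInj A T)
    (hsm : s < m) (hms : m < 2 * s) :
    ∃ (n : ℕ) (W : Fin n → Submodule ℝ (Fin N → ℝ)),
      (∀ i, Module.finrank ℝ (W i) ≤ 2 * s - m) ∧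
      ({x : Fin N → ℝ | l0 x ≤ s ∧
          ∃ z : Fin N → ℝ, z ≠ x ∧ l0 z ≤ s ∧ A.mulVec z = A.mulVec x}
        ⊆ ⋃ i, (W i : Set (Fin N → ℝ))) ∧
      2 * s - m < s := by
  let ι := {p : Finset (Fin N) × Finset (Fin N) //
    p.1.card ≤ s ∧ p.2.card ≤ s ∧ m ≤ (p.1 ∪ p.2).card}
  let e : ι ≃ Fin (Fintype.card ι) := Fintype.equivFin ι
  refine ⟨Fintype.card ι, fun i => coincidence A (e.symm i).1.1 (e.symm i).1.2,
    fun i => finrank_coincidence_le A hinj hsm (e.symm i).2.1 (e.symm i).2.2.1 (e.symm i).2.2.2,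
    ?_, by omega⟩
  rintro x ⟨hx, z, hzx, hz, hA⟩
  let S : Finset (Fin N) := Finset.univ.filter fun i => x i ≠ 0
  let S' : Finset (Fin N) := Finset.univ.filter fun i => z i ≠ 0
  have hU : m ≤ (S ∪ S').card := by
    by_contra! hlt
    refine hzx (sub_eq_zero.mp (hinj _ hlt.le (z - x) (fun i hi => ?_) ?_))
    · simp only [S, S', Finset.mem_union, Finset.mem_filter, Finset.mem_univ, true_and, ne_eq,
        not_or, not_not] at hi
      simp [hi.1, hi.2]
    · rw [Matrix.mulVec_sub, hA, sub_self]
  refine Set.mem_iUnion.mpr ⟨e ⟨(S, S'), hx, hz, hU⟩, ?_⟩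
  simp only [Equiv.symm_apply_apply]
  refine ⟨Pi.mem_spanSubset_iff.mpr fun i hi => ?_, z, Pi.mem_spanSubset_iff.mpr fun i hi => ?_, hA⟩
  · simpa [S] using hi
  · simpa [S'] using hi
end

section
/- Let B ∈ ℝ^{m×p} satisfy the restricted isometry property of order k (1 ≤ k ≤ p) with constant δ, 0 ≤ δ < 1. Fix a column index i ∈ {1,…,p}, let a ∈ ℝ^m denote the i-th column of B (which is nonzero), let P = I − a aᵀ/‖a‖₂² be the orthogonal projection onto the orthogonal complement of span{a}, and let B' ∈ ℝ^{m×(p−1)} be the matrix whose columns are the vectors P·c as c ranges over the columns of B other than the i-th, in their original order. Then B' satisfies the restricted isometry property of order k − 1 with constant δ; that is, (1−δ)‖y‖₂² ≤ ‖B'y‖₂² ≤ (1+δ)‖y‖₂² for every y ∈ ℝ^{p−1} with at most k−1 nonzero entries. In particular the (k−1)-th order restricted isometry constant of B' is at most the k-th order restricted isometry constant of B. -/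
/-!
Let `a` be the removed column, `y` a `(k-1)`-sparse vector and `u = ∑ j, y j • c j` the
corresponding combination of the remaining columns, so that `deflate B i *ᵥ y = P u`, where
`P u = u - (⟪a, u⟫ / ‖a‖²) • a`.

* Lower bound: `P u = B v`, where `v` is `y` with the entry `-⟪a, u⟫ / ‖a‖²` inserted at position
  `i`. The vector `v` is `k`-sparse and `‖v‖ ≥ ‖y‖`, so RIP of `B` at `v` suffices.
* Upper bound: `‖P u‖ ≤ ‖u‖`, and `u = B w`, where `w` is `y` with `0` inserted at position `i`;
  here `‖w‖ = ‖y‖`, so RIP of `B` at `w` suffices.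
-/

open Matrix Finset

/-- `M` satisfies the restricted isometry property of order `k` with constant `δ`. -/
def RIPc {m p : ℕ} (M : Matrix (Fin m) (Fin p) ℝ) (k : ℕ) (δ : ℝ) : Prop :=
  ∀ v : Fin p → ℝ, (Finset.univ.filter fun i => v i ≠ 0).card ≤ k →
    (1 - δ) * (∑ i, v i ^ 2) ≤ (∑ r, (M.mulVec v r) ^ 2) ∧
    (∑ r, (M.mulVec v r) ^ 2) ≤ (1 + δ) * (∑ i, v i ^ 2)

/-- The deflation step: remove the `j`-th column `a` of `M` and project the remaining
columns (in their original order) by `P = I - a aᵀ / ‖a‖₂²`, the orthogonal projection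
onto the orthogonal complement of `span {a}`. -/
noncomputable def deflate {m p : ℕ} (M : Matrix (Fin m) (Fin (p + 1)) ℝ)
    (j : Fin (p + 1)) : Matrix (Fin m) (Fin p) ℝ :=
  (((1 : Matrix (Fin m) (Fin m) ℝ) -
      Matrix.of fun r c => M r j * M c j / ∑ t, (M t j) ^ 2) * M).submatrix id j.succAbove

theorem card_support_insertNth_le {p : ℕ} (i : Fin (p + 1)) (c : ℝ) (y : Fin p → ℝ) :
    (Finset.univ.filter fun j => (i.insertNth c y : Fin (p + 1) → ℝ) j ≠ 0).card ≤
      (Finset.univ.filter fun j => y j ≠ 0).card + 1 := by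
  rw [Finset.card_filter, Finset.card_filter, Fin.sum_univ_succAbove _ i]
  simp only [Fin.insertNth_apply_same, Fin.insertNth_apply_succAbove]
  split_ifs <;> omega

theorem sum_sq_insertNth {p : ℕ} (i : Fin (p + 1)) (c : ℝ) (y : Fin p → ℝ) :
    ∑ j, (i.insertNth c y : Fin (p + 1) → ℝ) j ^ 2 = c ^ 2 + ∑ j, y j ^ 2 := by
  rw [Fin.sum_univ_succAbove _ i]
  simp

theorem mulVec_insertNth {m p : ℕ} (B : Matrix (Fin m) (Fin (p + 1)) ℝ) (i : Fin (p + 1))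
    (c : ℝ) (y : Fin p → ℝ) (r : Fin m) :
    B.mulVec (i.insertNth c y : Fin (p + 1) → ℝ) r =
      B r i * c + (B.submatrix id i.succAbove).mulVec y r := by
  simp only [Matrix.mulVec, dotProduct]
  rw [Fin.sum_univ_succAbove _ i]
  simp

/-- The deflated matrix applied to `y` is `u - (⟪a, u⟫ / ‖a‖²) • a`, where `a` is the removed
column and `u` is the combination of the remaining columns with coefficients `y`. -/
theorem deflate_mulVec {m p : ℕ} (B : Matrix (Fin m) (Fin (p + 1)) ℝ) (i : Fin (p + 1))
    (y : Fin p → ℝ) (r : Fin m) :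
    (deflate B i).mulVec y r = (B.submatrix id i.succAbove).mulVec y r -
      B r i * ((∑ t, B t i * (B.submatrix id i.succAbove).mulVec y t) / ∑ t, B t i ^ 2) := by
  have h : deflate B i = ((1 : Matrix (Fin m) (Fin m) ℝ) -
      Matrix.of fun r c => B r i * B c i / ∑ t, (B t i) ^ 2) * B.submatrix id i.succAbove := rfl
  rw [h, ← Matrix.mulVec_mulVec, Matrix.sub_mulVec, Matrix.one_mulVec, Pi.sub_apply]
  congr 1
  rw [Matrix.mulVec, dotProduct, Finset.sum_div, Finset.mul_sum]
  refine Finset.sum_congr rfl fun t _ => ?_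
  rw [Matrix.of_apply]
  ring

/-- Removing from `u` its component along `a` does not increase the Euclidean norm. -/
theorem sum_sq_sub_proj_le {m : ℕ} (a u : Fin m → ℝ) (ha : 0 < ∑ t, a t ^ 2) :
    ∑ r, (u r - a r * ((∑ t, a t * u t) / ∑ t, a t ^ 2)) ^ 2 ≤ ∑ r, u r ^ 2 := by
  set S := ∑ t, a t ^ 2 with hS
  set d := ∑ t, a t * u t with hd
  have h : ∑ r, (u r - a r * (d / S)) ^ 2 = ∑ r, u r ^ 2 - 2 * (d / S) * d + (d / S) ^ 2 * S := by
    generalize d / S = c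
    rw [hS, hd, Finset.mul_sum, Finset.mul_sum, ← Finset.sum_sub_distrib,
      ← Finset.sum_add_distrib]
    exact Finset.sum_congr rfl fun r _ => by ring
  have h2 : ∑ r, u r ^ 2 - 2 * (d / S) * d + (d / S) ^ 2 * S = ∑ r, u r ^ 2 - d ^ 2 / S := by
    field_simp
    ring
  have h3 : 0 ≤ d ^ 2 / S := by positivity
  linarith

/-- Deflating a matrix satisfying RIP of order `k` with constant `δ` along any (nonzero)
column yields a matrix satisfying RIP of order `k - 1` with the same constant `δ`. -/
theorem stmt7 (m p k : ℕ) (hk1 : 1 ≤ k) (hkp : k ≤ p + 1)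
    (B : Matrix (Fin m) (Fin (p + 1)) ℝ) (δ : ℝ) (hδ0 : 0 ≤ δ) (hδ1 : δ < 1)
    (hRIP : RIPc B k δ) (i : Fin (p + 1)) (ha : (fun r => B r i) ≠ 0) :
    RIPc (deflate B i) (k - 1) δ := by
  intro y hy
  have hS : 0 < ∑ t, B t i ^ 2 := by
    obtain ⟨r, hr⟩ := Function.ne_iff.mp ha
    exact Finset.sum_pos' (fun _ _ => sq_nonneg _) ⟨r, Finset.mem_univ _, sq_pos_of_ne_zero hr⟩
  have hsparse (c : ℝ) :
      (Finset.univ.filter fun j => (i.insertNth c y : Fin (p + 1) → ℝ) j ≠ 0).card ≤ k := by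
    have := card_support_insertNth_le i c y
    omega
  simp only [deflate_mulVec]
  constructor
  · set c := (∑ t, B t i * (B.submatrix id i.succAbove).mulVec y t) / ∑ t, B t i ^ 2
    have h := (hRIP _ (hsparse (-c))).1
    simp only [sum_sq_insertNth, mulVec_insertNth] at h
    have h2 : 0 ≤ (1 - δ) * (-c) ^ 2 := mul_nonneg (by linarith) (sq_nonneg _)
    calc (1 - δ) * ∑ j, y j ^ 2 ≤ (1 - δ) * ((-c) ^ 2 + ∑ j, y j ^ 2) := by linarith
      _ ≤ _ := h
      _ = _ := Finset.sum_congr rfl fun r _ => by ring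
  · have h := (hRIP _ (hsparse 0)).2
    simp only [sum_sq_insertNth, mulVec_insertNth, mul_zero, zero_add, ne_eq, OfNat.ofNat_ne_zero,
      not_false_eq_true, zero_pow] at h
    exact (sum_sq_sub_proj_le (fun t => B t i) _ hS).trans h
end

section
/- In the HTP-step setting, suppose additionally that l ∈ S* \ S. Then the l-th entry of u satisfies |u_l| ≥ (1 − δ − ((1+δ)/γ)·r) · |x*_l|, where r = ‖x*_{S*\(S∪{l})}‖₂ / ‖x*_{S*\{l}}‖₂. -/
/-!
Let `P` be the orthogonal projection onto the complement of the column span of `A_S`, and put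
`q = P a_l`, where `a_l` is the `l`-th column of `A`. Since `x_l = 0` and the residual `A (xs - x)`
equals `P (A xs)`,
`u_l = ⟨a_l, P (A xs)⟩ = xs_l ‖q‖² + ⟨q, A z⟩`, where `z` is the restriction of `xs` to
`S* \ (S ∪ {l})`.
The vector `q` is `A (e_l - w)` with `w` supported on `S`, so the restricted isometry property
gives `‖q‖² ≥ 1 - δ`; also `‖q‖² ≤ ‖a_l‖² ≤ 1 + δ` and `‖A z‖² ≤ (1 + δ) ‖z‖²`. By Cauchy-Schwarz
`|u_l| ≥ (1 - δ) |xs_l| - (1 + δ) ‖z‖`, and dominance bounds `‖z‖` by `|xs_l| r / γ`.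

The normal equations (`lsq_orth`) are used twice: for `x` (data `A xs`) and for `w` (data `a_l`).
-/

open Matrix Finset

/-- The Euclidean norm of the restriction of `v` to the index set `T`. -/
noncomputable def pnorm {N : ℕ} (T : Finset (Fin N)) (v : Fin N → ℝ) : ℝ :=
  Real.sqrt (∑ i ∈ T, v i ^ 2)

/-- Extension by zero of a vector indexed by `S`. -/
noncomputable def extS {N : ℕ} (S : Finset (Fin N)) (v : {i // i ∈ S} → ℝ) : Fin N → ℝ :=
  fun i => if h : i ∈ S then v ⟨i, h⟩ else 0

/-- The submatrix of the columns of `A` indexed by `S`. -/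
abbrev colS {m N : ℕ} (A : Matrix (Fin m) (Fin N) ℝ) (S : Finset (Fin N)) :
    Matrix (Fin m) {i // i ∈ S} ℝ :=
  A.submatrix id ((↑) : {i // i ∈ S} → Fin N)

lemma mulVec_extS {m N : ℕ} (A : Matrix (Fin m) (Fin N) ℝ) (S : Finset (Fin N))
    (v : {i // i ∈ S} → ℝ) : A *ᵥ extS S v = colS A S *ᵥ v := by
  ext r
  simp only [mulVec, dotProduct, submatrix_apply, id]
  rw [← Finset.sum_subset (Finset.subset_univ S), ← Finset.sum_coe_sort S]
  · refine Finset.sum_congr rfl fun i _ => ?_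
    simp [extS]
  · intro i _ hi
    simp [extS, hi]

lemma card_suppF_le {N : ℕ} {v : Fin N → ℝ} {T : Finset (Fin N)}
    (h : ∀ i, i ∉ T → v i = 0) : (suppF v).card ≤ T.card := by
  refine Finset.card_le_card fun i hi => ?_
  by_contra hT
  exact (Finset.mem_filter.mp hi).2 (h i hT)

lemma mulVec_dotProduct_eq {m N : ℕ} (A : Matrix (Fin m) (Fin N) ℝ) (v : Fin N → ℝ)
    (b : Fin m → ℝ) : A *ᵥ v ⬝ᵥ b = v ⬝ᵥ Aᵀ *ᵥ b := by
  rw [mulVec_transpose, dotProduct_comm, dotProduct_mulVec, dotProduct_comm]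

/-- The Gram matrix of the columns in `S` is invertible as soon as `A` is bounded below on vectors
supported on `S`. -/
lemma isUnit_gram {m N : ℕ} (A : Matrix (Fin m) (Fin N) ℝ) (S : Finset (Fin N)) (c : ℝ)
    (hc : 0 < c)
    (hlow : ∀ v : Fin N → ℝ, (∀ i, i ∉ S → v i = 0) →
      c * (∑ i, v i ^ 2) ≤ A *ᵥ v ⬝ᵥ A *ᵥ v) :
    IsUnit ((colS A S)ᵀ * colS A S) := by
  rw [← Matrix.mulVec_injective_iff_isUnit]
  refine (injective_iff_map_eq_zero
    (Matrix.mulVecLin ((colS A S)ᵀ * colS A S))).2 fun v hv => ?_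
  have hv' : ((colS A S)ᵀ * colS A S) *ᵥ v = 0 := hv
  have h0 : A *ᵥ extS S v ⬝ᵥ A *ᵥ extS S v = 0 := by
    rw [mulVec_extS, dotProduct_mulVec, ← mulVec_transpose, mulVec_mulVec, hv', zero_dotProduct]
  have h1 := hlow (extS S v) (fun i hi => by simp [extS, hi])
  rw [h0] at h1
  have h2 : ∑ i, extS S v i ^ 2 = 0 :=
    le_antisymm (by nlinarith) (Finset.sum_nonneg fun i _ => sq_nonneg _)
  ext i
  have h3 := (Finset.sum_eq_zero_iff_of_nonneg (fun i _ => sq_nonneg _)).1 h2 i.1 (Finset.mem_univ _)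
  simpa [extS] using h3

/-- Normal equations: the residual of the least-squares solution on `S` is orthogonal to every
`A v` with `v` supported on `S`. -/
lemma lsq_orth {m N : ℕ} (A : Matrix (Fin m) (Fin N) ℝ) (S : Finset (Fin N))
    (hG : IsUnit ((colS A S)ᵀ * colS A S)) (b : Fin m → ℝ) (x : Fin N → ℝ)
    (hx0 : ∀ i, i ∉ S → x i = 0)
    (hx : ∀ i : {i // i ∈ S}, x i.1 =
      ((((colS A S)ᵀ * colS A S)⁻¹ * (colS A S)ᵀ) *ᵥ b) i)
    (v : Fin N → ℝ) (hv : ∀ i, i ∉ S → v i = 0) :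
    A *ᵥ v ⬝ᵥ (b - A *ᵥ x) = 0 := by
  have hext : ∀ y : Fin N → ℝ, (∀ i, i ∉ S → y i = 0) → y = extS S (fun i => y i.1) := by
    intro y hy
    ext i
    by_cases h : i ∈ S
    · simp [extS, h]
    · simp [extS, h, hy i h]
  have hxf : (fun i : {i // i ∈ S} => x i.1) =
      (((colS A S)ᵀ * colS A S)⁻¹ * (colS A S)ᵀ) *ᵥ b := funext hx
  have hn : (colS A S)ᵀ *ᵥ (b - A *ᵥ x) = 0 := by
    rw [mulVec_sub, hext x hx0, mulVec_extS, hxf, mulVec_mulVec, mulVec_mulVec,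
      ← Matrix.mul_assoc, Matrix.mul_nonsing_inv, Matrix.one_mul, sub_self]
    exact (Matrix.isUnit_iff_isUnit_det _).1 hG
  rw [hext v hv, mulVec_extS, dotProduct_comm, dotProduct_mulVec, ← mulVec_transpose, hn,
    zero_dotProduct]

/-- HTP step, lower bound on `|u_l|` when `l ∈ S* \ S`. -/
theorem stmt11 (m N s : ℕ) (A : Matrix (Fin m) (Fin N) ℝ) (δ γ : ℝ)
    (hδ0 : 0 ≤ δ) (hδ1 : δ < 1) (hγ : 0 < γ)
    (hRIP : ∀ v : Fin N → ℝ, (suppF v).card ≤ s + 2 →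
      (1 - δ) * (∑ i, v i ^ 2) ≤ (∑ r, (A.mulVec v r) ^ 2) ∧
      (∑ r, (A.mulVec v r) ^ 2) ≤ (1 + δ) * (∑ i, v i ^ 2))
    (xs : Fin N → ℝ) (hxs : (suppF xs).card ≤ s)
    (S : Finset (Fin N)) (hScard : S.card = s)
    (x : Fin N → ℝ)
    (hx0 : ∀ i, i ∉ S → x i = 0)
    (hxls : ∀ i : {i // i ∈ S}, x i.1 =
      ((((A.submatrix id ((↑) : {i // i ∈ S} → Fin N))ᵀ *
          A.submatrix id ((↑) : {i // i ∈ S} → Fin N))⁻¹ *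
        (A.submatrix id ((↑) : {i // i ∈ S} → Fin N))ᵀ).mulVec (A.mulVec xs)) i)
    (l : Fin N) (hl : ∀ i, |xs i| ≤ |xs l|)
    (hne : pnorm ((suppF xs).erase l) xs ≠ 0)
    (hdom : γ * pnorm ((suppF xs).erase l) xs ≤ |xs l|)
    (u : Fin N → ℝ)
    (hu : ∀ j, u j = x j + Aᵀ.mulVec (A.mulVec xs - A.mulVec x) j)
    (hlmem : l ∈ suppF xs \ S) :
    (1 - δ - ((1 + δ) / γ) *
        (pnorm (suppF xs \ insert l S) xs / pnorm ((suppF xs).erase l) xs)) * |xs l|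
      ≤ |u l| := by
  have hsq : ∀ w : Fin m → ℝ, ∑ r, w r ^ 2 = w ⬝ᵥ w := fun w => by
    simp [dotProduct, sq]
  simp only [hsq] at hRIP
  rw [Finset.mem_sdiff] at hlmem
  obtain ⟨hls, hlS⟩ := hlmem
  have hG : IsUnit ((colS A S)ᵀ * colS A S) :=
    isUnit_gram A S (1 - δ) (by linarith) fun v hv =>
      (hRIP v (by have := card_suppF_le hv; omega)).1
  set e : Fin N → ℝ := Pi.single l 1 with he
  set w : Fin N → ℝ := extS S
    ((((colS A S)ᵀ * colS A S)⁻¹ * (colS A S)ᵀ) *ᵥ (A *ᵥ e)) with hw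
  have hw0 : ∀ i, i ∉ S → w i = 0 := fun i hi => by simp [hw, extS, hi]
  have horth_w := lsq_orth A S hG (A *ᵥ e) w hw0 (fun i => by simp [hw, extS])
  have horth_x := lsq_orth A S hG (A *ᵥ xs) x hx0 hxls
  set q : Fin m → ℝ := A *ᵥ e - A *ᵥ w with hq
  set z : Fin N → ℝ := fun i => if i ∈ suppF xs \ insert l S then xs i else 0 with hz
  have hul : u l = q ⬝ᵥ (A *ᵥ xs - A *ᵥ x) := by
    rw [hu, hx0 l hlS, zero_add, hq, sub_dotProduct, horth_x w hw0, sub_zero,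
      mulVec_dotProduct_eq, he, single_one_dotProduct]
  have hdecomp : ∀ i, i ∉ S → (xs - x - xs l • e - z) i = 0 := by
    intro i hi
    by_cases hil : i = l
    · subst hil
      simp [hz, he, hx0 i hi]
    · by_cases h : xs i = 0 <;> simp [hz, he, hx0 i hi, hil, hi, suppF, h]
  have hq1 : q ⬝ᵥ A *ᵥ e = q ⬝ᵥ q := by
    have h := horth_w w hw0
    rw [dotProduct_comm] at h
    conv_rhs => rw [hq, dotProduct_sub, ← hq, h, sub_zero]
  have hu2 : u l = xs l * (q ⬝ᵥ q) + q ⬝ᵥ A *ᵥ z := by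
    have h := horth_w _ hdecomp
    rw [dotProduct_comm] at h
    simp only [mulVec_sub, mulVec_smul, dotProduct_sub, dotProduct_smul, smul_eq_mul, hq1] at h
    rw [hul, dotProduct_sub]
    linarith
  have hcs : ∀ a b : Fin m → ℝ, (a ⬝ᵥ b) ^ 2 ≤ (a ⬝ᵥ a) * (b ⬝ᵥ b) := fun a b => by
    rw [← hsq, ← hsq]
    exact Finset.sum_mul_sq_le_sq_mul_sq _ _ _
  have hQlow : 1 - δ ≤ q ⬝ᵥ q := by
    have h := (hRIP (e - w) (by
      have := card_suppF_le (v := e - w) (T := insert l S) (fun i hi => by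
        rw [Finset.mem_insert, not_or] at hi
        simp [he, hi.1, hw0 i hi.2])
      rw [Finset.card_insert_of_notMem hlS] at this
      omega)).1
    rw [mulVec_sub] at h
    have h1 : 1 ≤ ∑ i, (e - w) i ^ 2 := by
      have := Finset.single_le_sum (f := fun i => (e - w) i ^ 2)
        (fun i _ => sq_nonneg _) (Finset.mem_univ l)
      simpa [he, hw0 l hlS] using this
    nlinarith
  have hE : A *ᵥ e ⬝ᵥ A *ᵥ e ≤ 1 + δ := by
    have h := (hRIP e (by
      have := card_suppF_le (v := e) (T := {l}) (fun i hi => by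
        rw [Finset.mem_singleton] at hi
        simp [he, hi])
      rw [Finset.card_singleton] at this
      omega)).2
    have h1 : ∑ i, e i ^ 2 = 1 := by
      simp [he, Pi.single_apply]
    rwa [h1, mul_one] at h
  have hQup : q ⬝ᵥ q ≤ 1 + δ := by
    have h := hcs q (A *ᵥ e)
    rw [hq1] at h
    nlinarith
  set Z := pnorm (suppF xs \ insert l S) xs with hZ
  have hZ0 : 0 ≤ Z := Real.sqrt_nonneg _
  have hAz : A *ᵥ z ⬝ᵥ A *ᵥ z ≤ (1 + δ) * Z ^ 2 := by
    have h := (hRIP z (by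
      have := card_suppF_le (v := z) (T := suppF xs \ insert l S) (fun i hi => by
        simp only [hz, if_neg hi])
      have := Finset.card_le_card (Finset.sdiff_subset (s := suppF xs) (t := insert l S))
      omega)).2
    have h1 : ∑ i, z i ^ 2 = Z ^ 2 := by
      rw [hZ, pnorm, Real.sq_sqrt (Finset.sum_nonneg fun i _ => sq_nonneg _)]
      simp only [hz, ite_pow, ne_eq, OfNat.ofNat_ne_zero, not_false_eq_true, zero_pow,
        Finset.sum_ite_mem, Finset.univ_inter]
    rwa [h1] at h
  have hcross : |q ⬝ᵥ A *ᵥ z| ≤ (1 + δ) * Z := by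
    refine abs_le_of_sq_le_sq ?_ (by positivity)
    calc (q ⬝ᵥ A *ᵥ z) ^ 2 ≤ (q ⬝ᵥ q) * (A *ᵥ z ⬝ᵥ A *ᵥ z) := hcs _ _
      _ ≤ (1 + δ) * ((1 + δ) * Z ^ 2) := by
        refine mul_le_mul hQup hAz ?_ (by linarith)
        rw [← hsq]
        exact Finset.sum_nonneg fun i _ => sq_nonneg _
      _ = ((1 + δ) * Z) ^ 2 := by ring
  have hmain : (1 - δ) * |xs l| - (1 + δ) * Z ≤ |u l| := by
    have h1 : |xs l * (q ⬝ᵥ q)| ≤ |u l| + |q ⬝ᵥ A *ᵥ z| := by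
      have : xs l * (q ⬝ᵥ q) = u l - q ⬝ᵥ A *ᵥ z := by rw [hu2]; ring
      rw [this]
      exact abs_sub _ _
    rw [abs_mul, abs_of_nonneg (by linarith : 0 ≤ q ⬝ᵥ q)] at h1
    nlinarith [mul_le_mul_of_nonneg_left hQlow (abs_nonneg (xs l))]
  set D := pnorm ((suppF xs).erase l) xs with hD
  have hD0 : 0 < D := lt_of_le_of_ne (Real.sqrt_nonneg _) (Ne.symm hne)
  have hdiv : (1 + δ) * Z ≤ (1 + δ) / γ * (Z / D) * |xs l| := by
    have h : (1 + δ) / γ * (Z / D) * |xs l| = (1 + δ) * Z * (|xs l| / (γ * D)) := by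
      field_simp
    rw [h]
    exact le_mul_of_one_le_right (by positivity) ((one_le_div (by positivity)).2 hdom)
  linarith
end

section
/- In the HTP-step setting, suppose additionally that l ∈ S* \ S, that δ < 1/2, and that the dominance factor satisfies γ > (2(1+δ)/(1−2δ))·r, where r = ‖x*_{S*\(S∪{l})}‖₂ / ‖x*_{S*\{l}}‖₂. Then |u_l| > |u_j| for every index j ∉ S ∪ S*. -/
/-!
Let `P` be the orthogonal projection onto the complement of the column space of `A_S`. The residual
is `b - A x = P A x*`, so for `j ∉ S`, with `a_j` the `j`-th column of `A`,
`u_j = ⟨P a_j, P a_l⟩ x*_l + ⟨P a_j, A x*_T⟩`, where `T = S* \ (S ∪ {l})`.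

Each `P a_j` is realised as `A w_j` with `w_j - e_j` supported on `S` (`exists_orth`). For a vector
`v = α w_l + β w_j` the lower isometry bound applies to `v` itself, whose support lies in
`S ∪ {l, j}`, and the upper bound to `α e_l + β e_j`, since projecting does not increase the norm
(`orth_le`). Hence `‖P a_l‖² ≥ 1 - δ`, `‖P a_j‖² ≤ 1 + δ`, and, by polarization,
`|⟨P a_j, P a_l⟩| ≤ δ`. Cauchy–Schwarz with `‖A x*_T‖² ≤ (1 + δ) ‖x*_T‖²` then gives
`|u_l| - |u_j| ≥ (1 - 2δ) |x*_l| - 2 (1 + δ) ‖x*_T‖`, and the dominance condition makes this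
positive.
-/

open Matrix Finset

lemma dot_sq_le {n : ℕ} (a b : Fin n → ℝ) : (a ⬝ᵥ b) ^ 2 ≤ (a ⬝ᵥ a) * (b ⬝ᵥ b) := by
  have h := Finset.sum_mul_sq_le_sq_mul_sq Finset.univ a b
  simpa [dotProduct, sq] using h

lemma dot_self_nonneg_real {n : ℕ} (a : Fin n → ℝ) : 0 ≤ a ⬝ᵥ a :=
  Finset.sum_nonneg fun i _ => mul_self_nonneg (a i)

lemma mulVec_restrict {m N : ℕ} (A : Matrix (Fin m) (Fin N) ℝ) (S : Finset (Fin N))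
    (z : Fin N → ℝ) (hz : ∀ i, i ∉ S → z i = 0) :
    A *ᵥ z = (A.submatrix id ((↑) : {i // i ∈ S} → Fin N)) *ᵥ (fun i => z i.1) := by
  funext r
  simp only [mulVec, dotProduct, submatrix_apply, id]
  rw [Finset.sum_coe_sort S (fun i => A r i * z i)]
  symm
  apply Finset.sum_subset (Finset.subset_univ S)
  intro i _ hi
  rw [hz i hi, mul_zero]

/-- The normal equations: the least-squares residual is orthogonal to the columns indexed by `S`. -/
lemma residual_orth {m N : ℕ} (A : Matrix (Fin m) (Fin N) ℝ) (S : Finset (Fin N))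
    (hinv : IsUnit ((A.submatrix id ((↑) : {i // i ∈ S} → Fin N))ᵀ *
          A.submatrix id ((↑) : {i // i ∈ S} → Fin N)))
    (b : Fin m → ℝ) (x : Fin N → ℝ) (hx0 : ∀ i, i ∉ S → x i = 0)
    (hxls : ∀ i : {i // i ∈ S}, x i.1 =
      ((((A.submatrix id ((↑) : {i // i ∈ S} → Fin N))ᵀ *
          A.submatrix id ((↑) : {i // i ∈ S} → Fin N))⁻¹ *
        (A.submatrix id ((↑) : {i // i ∈ S} → Fin N))ᵀ).mulVec b) i)
    (z : Fin N → ℝ) (hz : ∀ i, i ∉ S → z i = 0) :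
    (b - A *ᵥ x) ⬝ᵥ (A *ᵥ z) = 0 := by
  rw [mulVec_restrict A S z hz, mulVec_restrict A S x hx0, funext hxls]
  set B := A.submatrix id ((↑) : {i // i ∈ S} → Fin N)
  have hdet : IsUnit (Bᵀ * B).det := (Matrix.isUnit_iff_isUnit_det _).1 hinv
  rw [dotProduct_mulVec, ← mulVec_transpose, mulVec_sub, mulVec_mulVec, mulVec_mulVec,
    ← Matrix.mul_assoc, Matrix.mul_nonsing_inv _ hdet, Matrix.one_mul, sub_self,
    zero_dotProduct]

/-- Any `v` can be modified on `S` alone so that its image becomes orthogonal to the columns indexed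
by `S`: `A w = P (A v)` with `P` the projection onto their orthogonal complement. -/
lemma exists_orth {m N : ℕ} (A : Matrix (Fin m) (Fin N) ℝ) (S : Finset (Fin N))
    (hinv : IsUnit ((A.submatrix id ((↑) : {i // i ∈ S} → Fin N))ᵀ *
          A.submatrix id ((↑) : {i // i ∈ S} → Fin N)))
    (v : Fin N → ℝ) :
    ∃ w : Fin N → ℝ, (∀ i, i ∉ S → w i = v i) ∧
      ∀ z : Fin N → ℝ, (∀ i, i ∉ S → z i = 0) → (A *ᵥ w) ⬝ᵥ (A *ᵥ z) = 0 := by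
  classical
  let x : Fin N → ℝ := fun i => if h : i ∈ S then
      ((((A.submatrix id ((↑) : {i // i ∈ S} → Fin N))ᵀ *
          A.submatrix id ((↑) : {i // i ∈ S} → Fin N))⁻¹ *
        (A.submatrix id ((↑) : {i // i ∈ S} → Fin N))ᵀ).mulVec (A *ᵥ v)) ⟨i, h⟩ else 0
  have hx0 : ∀ i, i ∉ S → x i = 0 := fun i hi => by simp [x, hi]
  refine ⟨v - x, fun i hi => by simp [hx0 i hi], fun z hz => ?_⟩
  rw [mulVec_sub]
  exact residual_orth A S hinv (A *ᵥ v) x hx0 (fun i => by simp [x]) z hz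

/-- If `A w` is orthogonal to the columns indexed by `S`, then it is the shortest of all `A v` with
`v = w` off `S`. -/
lemma orth_le {m N : ℕ} (A : Matrix (Fin m) (Fin N) ℝ) (S : Finset (Fin N))
    (v w : Fin N → ℝ) (hwv : ∀ i, i ∉ S → w i = v i)
    (hw : ∀ z : Fin N → ℝ, (∀ i, i ∉ S → z i = 0) → (A *ᵥ w) ⬝ᵥ (A *ᵥ z) = 0) :
    (A *ᵥ w) ⬝ᵥ (A *ᵥ w) ≤ (A *ᵥ v) ⬝ᵥ (A *ᵥ v) := by
  have h := hw (v - w) (fun i hi => by simp [hwv i hi])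
  have hv : A *ᵥ v = A *ᵥ w + A *ᵥ (v - w) := by rw [← mulVec_add]; simp
  have hcomm : (A *ᵥ (v - w)) ⬝ᵥ (A *ᵥ w) = 0 := by rw [dotProduct_comm]; exact h
  have hn := dot_self_nonneg_real (A *ᵥ (v - w))
  rw [hv, add_dotProduct, dotProduct_add, dotProduct_add, h, hcomm]
  linarith

/-- HTP step: if `l ∈ S* \ S`, `δ < 1/2`, and the dominance factor satisfies
`γ > (2(1+δ)/(1-2δ)) · r`, then `|u_l| > |u_j|` for every `j ∉ S ∪ S*`. -/
theorem stmt13 (m N s : ℕ) (A : Matrix (Fin m) (Fin N) ℝ) (δ γ : ℝ)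
    (hδ0 : 0 ≤ δ) (hδ1 : δ < 1) (hγ : 0 < γ)
    (hRIP : ∀ v : Fin N → ℝ, (suppF v).card ≤ s + 2 →
      (1 - δ) * (∑ i, v i ^ 2) ≤ (∑ r, (A.mulVec v r) ^ 2) ∧
      (∑ r, (A.mulVec v r) ^ 2) ≤ (1 + δ) * (∑ i, v i ^ 2))
    (xs : Fin N → ℝ) (hxs : (suppF xs).card ≤ s)
    (S : Finset (Fin N)) (hScard : S.card = s)
    (x : Fin N → ℝ)
    (hx0 : ∀ i, i ∉ S → x i = 0)
    (hxls : ∀ i : {i // i ∈ S}, x i.1 =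
      ((((A.submatrix id ((↑) : {i // i ∈ S} → Fin N))ᵀ *
          A.submatrix id ((↑) : {i // i ∈ S} → Fin N))⁻¹ *
        (A.submatrix id ((↑) : {i // i ∈ S} → Fin N))ᵀ).mulVec (A.mulVec xs)) i)
    (l : Fin N) (hl : ∀ i, |xs i| ≤ |xs l|)
    (hne : pnorm ((suppF xs).erase l) xs ≠ 0)
    (hdom : γ * pnorm ((suppF xs).erase l) xs ≤ |xs l|)
    (u : Fin N → ℝ)
    (hu : ∀ j, u j = x j + Aᵀ.mulVec (A.mulVec xs - A.mulVec x) j)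
    (hlmem : l ∈ suppF xs \ S)
    (hδhalf : δ < 1 / 2)
    (hγbig : γ > (2 * (1 + δ) / (1 - 2 * δ)) *
      (pnorm (suppF xs \ insert l S) xs / pnorm ((suppF xs).erase l) xs)) :
    ∀ j, j ∉ S ∪ suppF xs → |u j| < |u l| := by
  classical
  intro j hj
  have hRIPT : ∀ T : Finset (Fin N), T.card ≤ s + 2 → ∀ v : Fin N → ℝ, (∀ i, i ∉ T → v i = 0) →
      (1 - δ) * (v ⬝ᵥ v) ≤ (A *ᵥ v) ⬝ᵥ (A *ᵥ v) ∧
      (A *ᵥ v) ⬝ᵥ (A *ᵥ v) ≤ (1 + δ) * (v ⬝ᵥ v) := by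
    intro T hT v hv
    have hsub : suppF v ⊆ T := by
      intro i hi
      by_contra h
      simp [suppF, hv i h] at hi
    have := hRIP v ((Finset.card_le_card hsub).trans hT)
    simpa [dotProduct, sq] using this
  have hinv : IsUnit ((A.submatrix id ((↑) : {i // i ∈ S} → Fin N))ᵀ *
          A.submatrix id ((↑) : {i // i ∈ S} → Fin N)) := by
    rw [← Matrix.mulVec_injective_iff_isUnit]
    intro p q hpq
    have h0 : ((A.submatrix id ((↑) : {i // i ∈ S} → Fin N))ᵀ *
          A.submatrix id ((↑) : {i // i ∈ S} → Fin N)) *ᵥ (p - q) = 0 := by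
      rw [mulVec_sub]; exact sub_eq_zero.2 hpq
    rw [← Matrix.conjTranspose_eq_transpose_of_trivial,
      Matrix.conjTranspose_mul_self_mulVec_eq_zero] at h0
    let z : Fin N → ℝ := fun i => if h : i ∈ S then (p - q) ⟨i, h⟩ else 0
    have hz : ∀ i, i ∉ S → z i = 0 := fun i hi => by simp [z, hi]
    have hzr : (fun i : {i // i ∈ S} => z i.1) = p - q := by funext i; simp [z]
    have hAz : A *ᵥ z = 0 := by rw [mulVec_restrict A S z hz, hzr]; exact h0
    have h1 := (hRIPT S (by omega) z hz).1
    rw [hAz, zero_dotProduct] at h1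
    have h2 := dot_self_nonneg_real z
    have h3 : z ⬝ᵥ z = 0 := by nlinarith
    have h4 : z = 0 := dotProduct_self_eq_zero.1 h3
    apply sub_eq_zero.1
    rw [← hzr, h4]; rfl
  have hjS : j ∉ S := fun h => hj (Finset.mem_union_left _ h)
  have hjX : j ∉ suppF xs := fun h => hj (Finset.mem_union_right _ h)
  have hlS : l ∉ S := (Finset.mem_sdiff.1 hlmem).2
  have hlX : l ∈ suppF xs := (Finset.mem_sdiff.1 hlmem).1
  have hjl : j ≠ l := fun h => hjX (h ▸ hlX)
  obtain ⟨wl, hwl, hwlo⟩ := exists_orth A S hinv (Pi.single l 1)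
  obtain ⟨wj, hwj, hwjo⟩ := exists_orth A S hinv (Pi.single j 1)
  have hcard : (insert l (insert j S)).card ≤ s + 2 := by
    have h1 := Finset.card_insert_le l (insert j S)
    have h2 := Finset.card_insert_le j S
    omega
  -- The projected columns `P a_l`, `P a_j` have a Gram form with the same isometry constant.
  have hgram : ∀ α β : ℝ,
      (1 - δ) * (α ^ 2 + β ^ 2) ≤ (A *ᵥ (α • wl + β • wj)) ⬝ᵥ (A *ᵥ (α • wl + β • wj)) ∧
      (A *ᵥ (α • wl + β • wj)) ⬝ᵥ (A *ᵥ (α • wl + β • wj)) ≤ (1 + δ) * (α ^ 2 + β ^ 2) := by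
    intro α β
    have hvl : (α • wl + β • wj) l = α := by
      simp [hwl l hlS, hwj l hlS, hjl.symm]
    have hvj : (α • wl + β • wj) j = β := by
      simp [hwl j hjS, hwj j hjS, hjl]
    constructor
    · have h1 := (hRIPT _ hcard (α • wl + β • wj) (fun i hi => by
        simp only [Finset.mem_insert, not_or] at hi
        obtain ⟨a, b, c⟩ := hi
        simp [hwl i c, hwj i c, a, b])).1
      refine le_trans (mul_le_mul_of_nonneg_left ?_ (by linarith)) h1
      have h2 : ∑ i ∈ ({l, j} : Finset (Fin N)),
          (α • wl + β • wj) i * (α • wl + β • wj) i ≤ (α • wl + β • wj) ⬝ᵥ (α • wl + β • wj) :=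
        Finset.sum_le_sum_of_subset_of_nonneg (Finset.subset_univ _)
          (fun i _ _ => mul_self_nonneg _)
      rw [Finset.sum_pair hjl.symm, hvl, hvj] at h2
      linarith [sq α, sq β]
    · let e : Fin N → ℝ := α • Pi.single l 1 + β • Pi.single j 1
      have h1 := orth_le A S e (α • wl + β • wj)
        (fun i hi => by simp [e, hwl i hi, hwj i hi])
        (fun z hz => by
          rw [mulVec_add, mulVec_smul, mulVec_smul, add_dotProduct, smul_dotProduct,
            smul_dotProduct, hwlo z hz, hwjo z hz]; simp)
      have h2 := (hRIPT _ hcard e (fun i hi => by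
        simp only [Finset.mem_insert, not_or] at hi
        obtain ⟨a, b, c⟩ := hi
        simp [e, a, b])).2
      have h3 : e ⬝ᵥ e = α ^ 2 + β ^ 2 := by
        simp [e, dotProduct_add, hjl, hjl.symm, sq]
      rw [h3] at h2
      exact h1.trans h2
  let T := suppF xs \ insert l S
  let xT : Fin N → ℝ := fun i => if i ∈ T then xs i else 0
  have hTcard : T.card ≤ s + 2 :=
    ((Finset.card_le_card Finset.sdiff_subset).trans hxs).trans (by omega)
  have hxT : (A *ᵥ xT) ⬝ᵥ (A *ᵥ xT) ≤ (1 + δ) * pnorm T xs ^ 2 := by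
    have h1 := (hRIPT T hTcard xT (fun i hi => by simp [xT, hi])).2
    have h2 : xT ⬝ᵥ xT = pnorm T xs ^ 2 := by
      rw [pnorm, Real.sq_sqrt (Finset.sum_nonneg fun i _ => sq_nonneg _)]
      simp [dotProduct, xT, Finset.sum_ite_mem, sq]
    rwa [h2] at h1
  -- For `k ∉ S`, `u_k = ⟨P a_k, A x*⟩`; entries of `x*` on `S` are annihilated and the entry at `l`
  -- may be carried by `w_l` instead of the unit vector.
  have hukey : ∀ k, k ∉ S → ∀ w : Fin N → ℝ,
      (∀ i, i ∉ S → w i = (Pi.single k 1 : Fin N → ℝ) i) →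
      (∀ z : Fin N → ℝ, (∀ i, i ∉ S → z i = 0) → (A *ᵥ w) ⬝ᵥ (A *ᵥ z) = 0) →
      u k = xs l * ((A *ᵥ w) ⬝ᵥ (A *ᵥ wl)) + (A *ᵥ w) ⬝ᵥ (A *ᵥ xT) := by
    intro k hk w hw hwo
    have hcol : Aᵀ.mulVec (A.mulVec xs - A.mulVec x) k =
        (A *ᵥ xs - A *ᵥ x) ⬝ᵥ (A *ᵥ Pi.single k 1) := by
      rw [mulVec_single_one, dotProduct_comm]; rfl
    have hres := residual_orth A S hinv (A *ᵥ xs) x hx0 hxls (Pi.single k 1 - w)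
      (fun i hi => by simp [hw i hi])
    rw [mulVec_sub, dotProduct_sub] at hres
    have hxo := hwo x hx0
    have hrest := hwo (xs - xs l • wl - xT) (fun i hi => by
      by_cases hil : i = l
      · subst hil
        simp [hwl i hi, xT, T]
      · by_cases hiX : i ∈ suppF xs
        · simp [hwl i hi, xT, T, hil, hi, hiX]
        · have : xs i = 0 := by simpa [suppF] using hiX
          simp [hwl i hi, xT, hil, this])
    rw [mulVec_sub, mulVec_sub, mulVec_smul, dotProduct_sub, dotProduct_sub, dotProduct_smul,
      smul_eq_mul] at hrest
    rw [hu k, hx0 k hk, hcol, sub_eq_zero.1 hres, sub_dotProduct, dotProduct_comm (A *ᵥ xs),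
      dotProduct_comm (A *ᵥ x), hxo]
    linarith
  have hul := hukey l hlS wl hwl hwlo
  have huj := hukey j hjS wj hwj hwjo
  have hpT : 0 ≤ pnorm T xs := Real.sqrt_nonneg _
  have hcs : ∀ w : Fin N → ℝ, (A *ᵥ w) ⬝ᵥ (A *ᵥ w) ≤ 1 + δ →
      |(A *ᵥ w) ⬝ᵥ (A *ᵥ xT)| ≤ (1 + δ) * pnorm T xs := by
    intro w hw
    apply abs_le_of_sq_le_sq _ (by positivity)
    calc _ ≤ _ := dot_sq_le _ _
      _ ≤ (1 + δ) * ((1 + δ) * pnorm T xs ^ 2) :=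
        mul_le_mul hw hxT (dot_self_nonneg_real _) (by linarith)
      _ = _ := by ring
  have hll := hgram 1 0
  have hjj := hgram 0 1
  have hp := hgram 1 1
  have hm := hgram 1 (-1)
  simp only [one_smul, zero_smul, neg_smul, add_zero, zero_add, mulVec_add, mulVec_neg,
    add_dotProduct, dotProduct_add, neg_dotProduct, dotProduct_neg,
    dotProduct_comm (A *ᵥ wl) (A *ᵥ wj)] at hll hjj hp hm
  have hL := hcs wl (by linarith [hll.2])
  have hJ := hcs wj (by linarith [hjj.2])
  have hc : |(A *ᵥ wj) ⬝ᵥ (A *ᵥ wl)| ≤ δ := by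
    rw [abs_le]; constructor <;> linarith [hp.1, hp.2, hm.1, hm.2]
  have hd : 1 - δ ≤ |(A *ᵥ wl) ⬝ᵥ (A *ᵥ wl)| := le_trans (by linarith [hll.1]) (le_abs_self _)
  have hpe : 0 < pnorm ((suppF xs).erase l) xs := lt_of_le_of_ne (Real.sqrt_nonneg _) hne.symm
  have hbig : 2 * (1 + δ) * pnorm T xs < (1 - 2 * δ) * |xs l| := by
    have h1 := mul_lt_mul_of_pos_right hγbig hpe
    have h2 : (2 * (1 + δ) / (1 - 2 * δ)) *
        (pnorm T xs / pnorm ((suppF xs).erase l) xs) * pnorm ((suppF xs).erase l) xs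
        = 2 * (1 + δ) * pnorm T xs / (1 - 2 * δ) := by
      field_simp
    have h3 := (h2 ▸ h1).trans_le hdom
    rw [div_lt_iff₀ (by linarith)] at h3
    linarith
  have hju : |u j| ≤ |xs l| * δ + (1 + δ) * pnorm T xs := by
    rw [huj]
    refine (abs_add_le _ _).trans (add_le_add ?_ hJ)
    rw [abs_mul]
    exact mul_le_mul_of_nonneg_left hc (abs_nonneg _)
  have hlu : |xs l| * (1 - δ) - (1 + δ) * pnorm T xs ≤ |u l| := by
    have h1 := mul_le_mul_of_nonneg_left hd (abs_nonneg (xs l))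
    rw [← abs_mul] at h1
    have h2 := abs_sub_abs_le_abs_add (xs l * ((A *ᵥ wl) ⬝ᵥ (A *ᵥ wl)))
      ((A *ᵥ wl) ⬝ᵥ (A *ᵥ xT))
    rw [hul]
    linarith
  linarith
end

section
/- In the HTP-step setting, suppose additionally that l ∈ S ∩ S*. Then the l-th entry of the least-squares solution x satisfies |x_l| ≥ (1 − (1/γ)·√((1+δ)/(1−δ))·r') · |x*_l|, where r' = ‖x*_{S*\S}‖₂ / ‖x*_{S*\{l}}‖₂. -/
/-!
Split `x* = x*_S + u` with `u` the part of `x*` off `S`, and put `w = x - x*_S`, a vector supported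
on `S`. The normal equations say that `A (x - x*) = A w - A u` is orthogonal to the columns of `A`
indexed by `S`, hence to `A w`, so `A w` is the orthogonal projection of `A u` and
`‖A w‖ ≤ ‖A u‖`. The restricted isometry property at both ends gives
`(1 - δ) ‖w‖² ≤ (1 + δ) ‖u‖²`, so `|x_l - x*_l| = |w_l| ≤ √((1 + δ) / (1 - δ)) ‖x*_{S* \ S}‖`,
and the dominance condition turns the right-hand side into a multiple of `|x*_l|`.
-/

open Matrix Finset

lemma mulVec_eq_submatrix_mulVec {m N : ℕ} (A : Matrix (Fin m) (Fin N) ℝ) (S : Finset (Fin N))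
    (z : Fin N → ℝ) (hz : ∀ i, i ∉ S → z i = 0) :
    A.mulVec z = (A.submatrix id ((↑) : {i // i ∈ S} → Fin N)).mulVec (fun i => z i.1) := by
  ext r
  simp only [Matrix.mulVec, dotProduct, Matrix.submatrix_apply, id]
  rw [Finset.sum_coe_sort S (fun i => A r i * z i)]
  symm
  apply Finset.sum_subset (Finset.subset_univ S)
  intro i _ hi
  rw [hz i hi, mul_zero]

lemma suppF_card_le_of_subset {N : ℕ} (T : Finset (Fin N)) (z : Fin N → ℝ)
    (hz : ∀ i, i ∉ T → z i = 0) : (suppF z).card ≤ T.card := by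
  apply Finset.card_le_card
  intro i hi
  by_contra h
  simp [suppF, hz i h] at hi

/-- A matrix bounded below on the vectors supported on `S` has an invertible Gram matrix on the
columns indexed by `S`. -/
lemma isUnit_gram_det {m N : ℕ} (A : Matrix (Fin m) (Fin N) ℝ) (S : Finset (Fin N)) (c : ℝ)
    (hc : 0 < c) (hlow : ∀ z : Fin N → ℝ, (∀ i, i ∉ S → z i = 0) →
      c * (∑ i, z i ^ 2) ≤ ∑ r, (A.mulVec z r) ^ 2) :
    IsUnit ((A.submatrix id ((↑) : {i // i ∈ S} → Fin N))ᵀ *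
          A.submatrix id ((↑) : {i // i ∈ S} → Fin N)).det := by
  rw [isUnit_iff_ne_zero]
  intro hdet
  obtain ⟨v, hv, hMv⟩ := Matrix.exists_mulVec_eq_zero_iff.mpr hdet
  have hB : (A.submatrix id ((↑) : {i // i ∈ S} → Fin N)).mulVec v = 0 := by
    rw [← Matrix.conjTranspose_eq_transpose_of_trivial] at hMv
    exact (Matrix.conjTranspose_mul_self_mulVec_eq_zero _ _).mp hMv
  let z : Fin N → ℝ := fun i => if h : i ∈ S then v ⟨i, h⟩ else 0
  have hz : ∀ i, i ∉ S → z i = 0 := fun i hi => by simp [z, hi]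
  have hzv : (fun i : {i // i ∈ S} => z i.1) = v := by
    ext i
    simp [z]
  have h1 := hlow z hz
  rw [mulVec_eq_submatrix_mulVec A S z hz, hzv, hB] at h1
  have h2 : ∑ i, z i ^ 2 = 0 := by
    apply le_antisymm _ (Finset.sum_nonneg fun i _ => sq_nonneg _)
    simp at h1
    nlinarith
  apply hv
  rw [← hzv]
  ext i
  have := (Finset.sum_eq_zero_iff_of_nonneg (fun i _ => sq_nonneg (z i))).mp h2 i.1
    (Finset.mem_univ _)
  simpa using this

/-- HTP step, lower bound on `|x_l|` when `l ∈ S ∩ S*`. -/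
theorem stmt14 (m N s : ℕ) (A : Matrix (Fin m) (Fin N) ℝ) (δ γ : ℝ)
    (hδ0 : 0 ≤ δ) (hδ1 : δ < 1) (hγ : 0 < γ)
    (hRIP : ∀ v : Fin N → ℝ, (suppF v).card ≤ s + 2 →
      (1 - δ) * (∑ i, v i ^ 2) ≤ (∑ r, (A.mulVec v r) ^ 2) ∧
      (∑ r, (A.mulVec v r) ^ 2) ≤ (1 + δ) * (∑ i, v i ^ 2))
    (xs : Fin N → ℝ) (hxs : (suppF xs).card ≤ s)
    (S : Finset (Fin N)) (hScard : S.card = s)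
    (x : Fin N → ℝ)
    (hx0 : ∀ i, i ∉ S → x i = 0)
    (hxls : ∀ i : {i // i ∈ S}, x i.1 =
      ((((A.submatrix id ((↑) : {i // i ∈ S} → Fin N))ᵀ *
          A.submatrix id ((↑) : {i // i ∈ S} → Fin N))⁻¹ *
        (A.submatrix id ((↑) : {i // i ∈ S} → Fin N))ᵀ).mulVec (A.mulVec xs)) i)
    (l : Fin N) (hl : ∀ i, |xs i| ≤ |xs l|)
    (hne : pnorm ((suppF xs).erase l) xs ≠ 0)
    (hdom : γ * pnorm ((suppF xs).erase l) xs ≤ |xs l|)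
    (hlmem : l ∈ S ∩ suppF xs) :
    (1 - (1 / γ) * Real.sqrt ((1 + δ) / (1 - δ)) *
        (pnorm (suppF xs \ S) xs / pnorm ((suppF xs).erase l) xs)) * |xs l|
      ≤ |x l| := by
  have hlow : ∀ z : Fin N → ℝ, (∀ i, i ∉ S → z i = 0) →
      (1 - δ) * (∑ i, z i ^ 2) ≤ ∑ r, (A.mulVec z r) ^ 2 := fun z hz =>
    (hRIP z (by have := suppF_card_le_of_subset S z hz; omega)).1
  have hunit := isUnit_gram_det A S (1 - δ) (by linarith) hlow
  have hlS : l ∈ S := (Finset.mem_inter.mp hlmem).1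
  set B := A.submatrix id ((↑) : {i // i ∈ S} → Fin N) with hBdef
  let u : Fin N → ℝ := fun i => if i ∈ S then 0 else xs i
  let w : Fin N → ℝ := fun i => if i ∈ S then x i - xs i else 0
  have hw0 : ∀ i, i ∉ S → w i = 0 := fun i hi => by simp [w, hi]
  have hxw : x = xs + (w - u) := by
    ext i
    by_cases hi : i ∈ S
    · simp [w, u, hi]
    · simp [w, u, hi, hx0 i hi]
  have hnormal : Bᵀ.mulVec (A.mulVec w - A.mulVec u) = 0 := by
    have hxB : (fun i : {i // i ∈ S} => x i.1) = ((Bᵀ * B)⁻¹ * Bᵀ).mulVec (A.mulVec xs) :=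
      funext hxls
    have h1 : Bᵀ.mulVec (A.mulVec x) = Bᵀ.mulVec (A.mulVec xs) := by
      rw [mulVec_eq_submatrix_mulVec A S x hx0, hxB, ← hBdef, Matrix.mulVec_mulVec,
        Matrix.mulVec_mulVec, ← Matrix.mul_assoc, Matrix.mul_nonsing_inv _ hunit, Matrix.one_mul]
    rw [hxw, Matrix.mulVec_add, Matrix.mulVec_add, Matrix.mulVec_sub] at h1
    simpa using h1
  have horth : A.mulVec w ⬝ᵥ (A.mulVec w - A.mulVec u) = 0 := by
    nth_rewrite 1 [mulVec_eq_submatrix_mulVec A S w hw0]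
    rw [← hBdef, ← Matrix.vecMul_transpose, ← Matrix.dotProduct_mulVec, hnormal, dotProduct_zero]
  have hproj : ∑ r, (A.mulVec w r) ^ 2 ≤ ∑ r, (A.mulVec u r) ^ 2 := by
    have h1 : ∑ r, (A.mulVec u r) ^ 2 = ∑ r, (A.mulVec w r) ^ 2
        + ∑ r, (A.mulVec w r - A.mulVec u r) ^ 2
        - 2 * (A.mulVec w ⬝ᵥ (A.mulVec w - A.mulVec u)) := by
      simp only [dotProduct, Finset.mul_sum, ← Finset.sum_add_distrib, ← Finset.sum_sub_distrib,
        Pi.sub_apply]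
      apply Finset.sum_congr rfl
      intro r _
      ring
    rw [h1, horth]
    have : 0 ≤ ∑ r, (A.mulVec w r - A.mulVec u r) ^ 2 := Finset.sum_nonneg fun r _ => sq_nonneg _
    linarith
  have hucard : (suppF u).card ≤ s + 2 := by
    have := suppF_card_le_of_subset (suppF xs) u (fun i hi => by
      have : xs i = 0 := by simpa [suppF] using hi
      simp [u, this])
    omega
  have hunorm : ∑ i, u i ^ 2 = ∑ i ∈ suppF xs \ S, xs i ^ 2 := by
    symm
    rw [← Finset.sum_subset (Finset.subset_univ (suppF xs \ S))]
    · apply Finset.sum_congr rfl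
      intro i hi
      simp [u, (Finset.mem_sdiff.mp hi).2]
    · intro i _ hi
      by_cases hS : i ∈ S
      · simp [u, hS]
      · have : xs i = 0 := by
          by_contra h
          exact hi (by simp [suppF, h, hS])
        simp [u, this]
  have hδ : 0 < 1 - δ := by linarith
  have hdiff : |x l - xs l| ≤ Real.sqrt ((1 + δ) / (1 - δ)) * pnorm (suppF xs \ S) xs := by
    rw [pnorm, ← hunorm, ← Real.sqrt_mul (by positivity)]
    apply Real.abs_le_sqrt
    have h1 : w l ^ 2 ≤ ∑ i, w i ^ 2 :=
      Finset.single_le_sum (f := fun i => w i ^ 2) (fun i _ => sq_nonneg _) (Finset.mem_univ l)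
    have h2 : w l = x l - xs l := by simp [w, hlS]
    rw [h2] at h1
    rw [div_mul_eq_mul_div, le_div_iff₀ hδ]
    have h3 := (hRIP u hucard).2
    have h4 := hlow w hw0
    nlinarith
  set P := pnorm ((suppF xs).erase l) xs with hP
  set Q := pnorm (suppF xs \ S) xs with hQ
  set C := Real.sqrt ((1 + δ) / (1 - δ)) with hC
  have hPpos : 0 < P := lt_of_le_of_ne (Real.sqrt_nonneg _) (Ne.symm hne)
  have hQ0 : 0 ≤ Q := Real.sqrt_nonneg _
  have hC0 : 0 ≤ C := Real.sqrt_nonneg _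
  have hfinal : C * Q ≤ (1 / γ) * C * (Q / P) * |xs l| := by
    have : (1 / γ) * C * (Q / P) * |xs l| = C * Q * |xs l| / (γ * P) := by
      field_simp
    rw [this, le_div_iff₀ (by positivity)]
    exact mul_le_mul_of_nonneg_left hdom (by positivity)
  have htri : |xs l| - |x l| ≤ |x l - xs l| := by
    rw [abs_sub_comm]
    exact abs_sub_abs_le_abs_sub _ _
  linarith
end

section
/- In the OMP-step setting, the l-th entry of u = Aᵀ A x* satisfies |u_l| ≥ (1 − δ − δ/γ) · |x*_l|. -/
/-!
Write `xs = a e_l + z` with `a = xs l`, so that `z` is the restriction of `xs` to its support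
without `l`. Then `u_l = ⟨A e_l, A xs⟩ = a ‖A e_l‖² + ⟨A e_l, A z⟩`. The restricted isometry
property gives `‖A e_l‖² ≥ 1 - δ`, and polarization (comparing `‖A (z + t e_l)‖²` with
`‖A (z - t e_l)‖²` at `t = ‖z‖`) gives `|⟨A e_l, A z⟩| ≤ δ ‖z‖`. The dominance condition bounds
`‖z‖` by `|a| / γ`.
-/

open Matrix Finset

/-- OMP step, lower bound on `|u_l|` where `u = Aᵀ A x*`. -/
theorem stmt17 (m N s : ℕ) (hs : 1 ≤ s) (A : Matrix (Fin m) (Fin N) ℝ) (δ γ : ℝ)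
    (hδ0 : 0 ≤ δ) (hδ1 : δ < 1) (hγ : 0 < γ)
    (hRIP : ∀ v : Fin N → ℝ, (suppF v).card ≤ s + 1 →
      (1 - δ) * (∑ i, v i ^ 2) ≤ (∑ r, (A.mulVec v r) ^ 2) ∧
      (∑ r, (A.mulVec v r) ^ 2) ≤ (1 + δ) * (∑ i, v i ^ 2))
    (xs : Fin N → ℝ) (hxs : (suppF xs).card ≤ s) (hxsne : xs ≠ 0)
    (u : Fin N → ℝ) (hu : ∀ j, u j = Aᵀ.mulVec (A.mulVec xs) j)
    (l : Fin N) (hl : ∀ i, |xs i| ≤ |xs l|)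
    (hdom : γ * pnorm ((suppF xs).erase l) xs ≤ |xs l|) :
    (1 - δ - δ / γ) * |xs l| ≤ |u l| := by
  classical
  set p := pnorm ((suppF xs).erase l) xs with hp
  set z : Fin N → ℝ := Function.update xs l 0 with hz
  have hp0 : 0 ≤ p := Real.sqrt_nonneg _
  have hzp : ∑ i, z i ^ 2 = p ^ 2 := by
    rw [hp, pnorm, Real.sq_sqrt (Finset.sum_nonneg fun i _ => sq_nonneg _)]
    symm
    have h1 : ∑ i ∈ (suppF xs).erase l, xs i ^ 2 = ∑ i ∈ (suppF xs).erase l, z i ^ 2 := by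
      refine Finset.sum_congr rfl fun i hi => ?_
      simp [hz, Function.update_of_ne (Finset.ne_of_mem_erase hi)]
    rw [h1]
    refine Finset.sum_subset (Finset.subset_univ _) fun i _ hi => ?_
    by_cases h : i = l
    · simp [hz, h]
    · simpa [hz, h, suppF] using hi
  have hzl : z l = 0 := by simp [hz]
  have hxl : xs = z + Pi.single l (xs l) := by
    ext i
    by_cases h : i = l
    · subst h; simp [hz]
    · simp [hz, h]
  have hcol (t : ℝ) (r : Fin m) : A.mulVec (z + Pi.single l t) r = A.mulVec z r + t * A r l := by
    rw [Matrix.mulVec_add]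
    simp
  -- Adding a multiple of `e_l` to `z` costs at most one index beyond the support of `xs`.
  have hcard (t : ℝ) : (suppF (z + Pi.single l t)).card ≤ s + 1 := by
    have hsub : suppF (z + Pi.single l t) ⊆ insert l (suppF xs) := by
      intro i hi
      by_cases h : i = l
      · simp [h]
      · simpa [suppF, hz, h] using hi
    have h1 := Finset.card_le_card hsub
    have h2 := Finset.card_insert_le l (suppF xs)
    omega
  have hnorm (t : ℝ) : ∑ i, (z + Pi.single l t : Fin N → ℝ) i ^ 2 = p ^ 2 + t ^ 2 := by
    have h1 (i : Fin N) : (z + Pi.single l t : Fin N → ℝ) i ^ 2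
        = z i ^ 2 + if i = l then t ^ 2 else 0 := by
      by_cases h : i = l
      · subst h; simp [hzl]
      · simp [h]
    rw [Finset.sum_congr rfl fun i _ => h1 i, Finset.sum_add_distrib, hzp]
    simp
  set E := ∑ r, A r l ^ 2 with hE
  set c := ∑ r, A r l * A.mulVec z r with hc
  have hquad (t : ℝ) : ∑ r, A.mulVec (z + Pi.single l t) r ^ 2
      = ∑ r, A.mulVec z r ^ 2 + 2 * t * c + t ^ 2 * E := by
    rw [hc, hE, Finset.mul_sum, Finset.mul_sum, ← Finset.sum_add_distrib,
      ← Finset.sum_add_distrib]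
    refine Finset.sum_congr rfl fun r _ => ?_
    rw [hcol]; ring
  have hR (t : ℝ) := hRIP _ (hcard t)
  simp only [hquad, hnorm] at hR
  have hE1 : 1 - δ ≤ E := by
    have hsupp : (suppF (Pi.single l (1 : ℝ))).card ≤ s + 1 := by
      have hsub : suppF (Pi.single l (1 : ℝ)) ⊆ {l} := by
        intro i hi
        by_contra h
        have hil : i ≠ l := by simpa using h
        simp [suppF, hil] at hi
      have h1 := Finset.card_le_card hsub
      simp only [Finset.card_singleton] at h1
      omega
    have h := (hRIP _ hsupp).1
    have h1 : ∑ i, (Pi.single l (1 : ℝ) : Fin N → ℝ) i ^ 2 = 1 := by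
      simp [Pi.single_apply]
    rw [h1] at h
    simpa [hE] using h
  have hcb : |c| ≤ δ * p := by
    have h1 := hR p
    have h2 := hR (-p)
    rcases hp0.eq_or_lt with h0 | hpos
    · -- For `p = 0` the polarization bound is vacuous, but then `z = 0`.
      have hz0 : z = 0 := by
        rw [← h0] at hzp
        ext i
        have := (Finset.sum_eq_zero_iff_of_nonneg fun i _ => sq_nonneg (z i)).1
          (by simpa using hzp) i (Finset.mem_univ i)
        simpa using this
      simp [hc, hz0, ← h0]
    · rw [abs_le]
      constructor <;> refine le_of_mul_le_mul_left ?_ hpos <;> nlinarith [h1.1, h1.2, h2.1, h2.2]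
  have hul : u l = xs l * E + c := by
    have h1 : u l = ∑ r, A r l * A.mulVec (z + Pi.single l (xs l)) r := by
      rw [← hxl, hu]; rfl
    rw [h1, hE, hc, Finset.mul_sum, ← Finset.sum_add_distrib]
    refine Finset.sum_congr rfl fun r _ => ?_
    rw [hcol]; ring
  have hpa : p ≤ |xs l| / γ := by
    rw [le_div_iff₀ hγ]; linarith
  have hE0 : 0 ≤ E := by linarith
  have htri : |xs l| * E - |c| ≤ |u l| := by
    have h := abs_sub_abs_le_abs_sub (xs l * E) (-c)
    rwa [abs_neg, sub_neg_eq_add, abs_mul, abs_of_nonneg hE0, ← hul] at h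
  calc (1 - δ - δ / γ) * |xs l| = |xs l| * (1 - δ) - δ * (|xs l| / γ) := by ring
    _ ≤ |xs l| * E - δ * p := by gcongr
    _ ≤ |u l| := by linarith
end

section
/- In the OMP-step setting, for every index j ≠ l, the j-th entry of u = Aᵀ A x* satisfies |u_j| ≤ (δ + (1/γ)·√(δ² + (1+δ)²)) · |x*_l|. -/
/-!
Write `u_j = ⟨A e_j, A x⟩` and split `x = x_l e_l + z`, where `z` is `x` with its `l`-th entry
set to zero. Polarization and the restricted isometry property on the 2-sparse vectors `e_j ± e_l`
give `|⟨A e_j, A e_l⟩| ≤ δ`, while Cauchy–Schwarz and the upper isometry bound on `e_j` and `z` give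
`|⟨A e_j, A z⟩| ≤ (1 + δ) ‖z‖`. The dominance condition gives `‖z‖ ≤ |x_l| / γ`, and
`1 + δ ≤ √(δ² + (1 + δ)²)`.
-/

open Matrix Finset

theorem sum_update_zero_sq {N : ℕ} (x : Fin N → ℝ) (l : Fin N) :
    ∑ i, (Function.update x l 0) i ^ 2 = ∑ i ∈ (suppF x).erase l, x i ^ 2 := by
  symm
  rw [← Finset.sum_subset (Finset.subset_univ ((suppF x).erase l))]
  · refine Finset.sum_congr rfl fun i hi => ?_
    rw [Function.update_of_ne (Finset.ne_of_mem_erase hi)]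
  · intro i _ hi
    by_cases h : i = l
    · subst h; simp
    · simp [suppF, h] at hi
      simp [h, hi]

theorem sum_single_add_single_sq {N : ℕ} (j l : Fin N) (hjl : j ≠ l) (c : ℝ) :
    ∑ i, (Pi.single j (1 : ℝ) + Pi.single l c : Fin N → ℝ) i ^ 2 = 1 + c ^ 2 := by
  have h : ∀ i, (Pi.single j (1 : ℝ) + Pi.single l c : Fin N → ℝ) i ^ 2
      = (if i = j then 1 else 0) + (if i = l then c ^ 2 else 0) := by
    intro i
    simp only [Pi.add_apply, Pi.single_apply]
    by_cases h1 : i = j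
    · have h2 : i ≠ l := fun h => hjl (h1.symm.trans h)
      simp [h1, hjl]
    · by_cases h2 : i = l <;> simp [h1, h2]
      simp [hjl.symm]
  simp only [h, Finset.sum_add_distrib]
  simp

theorem card_suppF_single_add_single {N : ℕ} (j l : Fin N) (c : ℝ) :
    (suppF (Pi.single j (1 : ℝ) + Pi.single l c)).card ≤ 2 := by
  refine (Finset.card_le_card (t := {j, l}) ?_).trans Finset.card_le_two
  intro i hi
  by_contra h
  simp only [Finset.mem_insert, Finset.mem_singleton, not_or] at h
  simp [suppF, h.1, h.2] at hi

/-- OMP step, upper bound on `|u_j|` for `j ≠ l`, where `u = Aᵀ A x*`. -/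
theorem stmt18 (m N s : ℕ) (hs : 1 ≤ s) (A : Matrix (Fin m) (Fin N) ℝ) (δ γ : ℝ)
    (hδ0 : 0 ≤ δ) (hδ1 : δ < 1) (hγ : 0 < γ)
    (hRIP : ∀ v : Fin N → ℝ, (suppF v).card ≤ s + 1 →
      (1 - δ) * (∑ i, v i ^ 2) ≤ (∑ r, (A.mulVec v r) ^ 2) ∧
      (∑ r, (A.mulVec v r) ^ 2) ≤ (1 + δ) * (∑ i, v i ^ 2))
    (xs : Fin N → ℝ) (hxs : (suppF xs).card ≤ s) (hxsne : xs ≠ 0)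
    (u : Fin N → ℝ) (hu : ∀ j, u j = Aᵀ.mulVec (A.mulVec xs) j)
    (l : Fin N) (hl : ∀ i, |xs i| ≤ |xs l|)
    (hdom : γ * pnorm ((suppF xs).erase l) xs ≤ |xs l|) :
    ∀ j, j ≠ l →
      |u j| ≤ (δ + (1 / γ) * Real.sqrt (δ ^ 2 + (1 + δ) ^ 2)) * |xs l| := by
  intro j hj
  obtain ⟨a, ha⟩ : ∃ a : Fin m → ℝ, a = A.mulVec (Pi.single j 1) := ⟨_, rfl⟩
  obtain ⟨b, hb⟩ : ∃ b : Fin m → ℝ, b = A.mulVec (Pi.single l 1) := ⟨_, rfl⟩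
  obtain ⟨z, hz⟩ : ∃ z : Fin N → ℝ, z = Function.update xs l 0 := ⟨_, rfl⟩
  have hsplit : xs = xs l • Pi.single l (1 : ℝ) + z := by
    ext i
    by_cases h : i = l
    · subst h; simp [hz]
    · simp [hz, h]
  have hAx : A.mulVec xs = xs l • b + A.mulVec z := by
    conv_lhs => rw [hsplit]
    rw [Matrix.mulVec_add, Matrix.mulVec_smul, ← hb]
  have huj : u j = xs l * (∑ r, a r * b r) + ∑ r, a r * A.mulVec z r := by
    rw [hu, hAx, Finset.mul_sum, ← Finset.sum_add_distrib]
    simp only [Matrix.mulVec, dotProduct, Matrix.transpose_apply]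
    refine Finset.sum_congr rfl fun r _ => ?_
    have : a r = A r j := by simp [ha]
    simp only [this, Pi.add_apply, Pi.smul_apply, smul_eq_mul, Matrix.mulVec, dotProduct]
    ring
  have hpol : ∀ c : ℝ, ∑ r, A.mulVec (Pi.single j 1 + Pi.single l c) r ^ 2
      = ∑ r, a r ^ 2 + 2 * c * ∑ r, a r * b r + c ^ 2 * ∑ r, b r ^ 2 := by
    intro c
    have hc : (Pi.single l c : Fin N → ℝ) = c • Pi.single l 1 := by
      rw [← Pi.single_smul]; simp
    rw [hc, Matrix.mulVec_add, Matrix.mulVec_smul, Finset.mul_sum, Finset.mul_sum,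
      ← Finset.sum_add_distrib, ← Finset.sum_add_distrib]
    refine Finset.sum_congr rfl fun r _ => ?_
    simp only [Pi.add_apply, Pi.smul_apply, smul_eq_mul, ← ha, ← hb]
    ring
  -- `c = 1` and `c = -1` polarize `⟨A e_j, A e_l⟩`; `c = 0` bounds `‖A e_j‖²`.
  have hR : ∀ c : ℝ,
      (1 - δ) * (1 + c ^ 2)
        ≤ ∑ r, a r ^ 2 + 2 * c * ∑ r, a r * b r + c ^ 2 * ∑ r, b r ^ 2 ∧
      ∑ r, a r ^ 2 + 2 * c * ∑ r, a r * b r + c ^ 2 * ∑ r, b r ^ 2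
        ≤ (1 + δ) * (1 + c ^ 2) := by
    intro c
    have h := hRIP (Pi.single j 1 + Pi.single l c)
      ((card_suppF_single_add_single j l c).trans (by omega))
    rwa [hpol, sum_single_add_single_sq j l hj] at h
  have hab : |∑ r, a r * b r| ≤ δ := by
    have h1 := hR 1
    have h2 := hR (-1)
    rw [abs_le]
    constructor <;> linarith [h1.1, h1.2, h2.1, h2.2]
  have haa : ∑ r, a r ^ 2 ≤ 1 + δ := by
    have := (hR 0).2
    linarith
  have hzcard : (suppF z).card ≤ s + 1 := by
    refine (Finset.card_le_card (t := suppF xs) ?_).trans (by omega)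
    intro i hi
    by_cases h : i = l
    · subst h; simp [suppF, hz] at hi
    · simpa [suppF, hz, h] using hi
  have hzz := (hRIP z hzcard).2
  rw [hz, sum_update_zero_sq, ← hz] at hzz
  obtain ⟨p, hp⟩ : ∃ p, p = pnorm ((suppF xs).erase l) xs := ⟨_, rfl⟩
  rw [← hp] at hdom
  have hp0 : 0 ≤ p := hp ▸ Real.sqrt_nonneg _
  have hp2 : ∑ i ∈ (suppF xs).erase l, xs i ^ 2 = p ^ 2 := by
    rw [hp]
    exact (Real.sq_sqrt (Finset.sum_nonneg fun i _ => sq_nonneg _)).symm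
  rw [hp2] at hzz
  have haz : |∑ r, a r * A.mulVec z r| ≤ (1 + δ) * p := by
    apply abs_le_of_sq_le_sq _ (by positivity)
    calc _ ≤ (∑ r, a r ^ 2) * ∑ r, A.mulVec z r ^ 2 := Finset.sum_mul_sq_le_sq_mul_sq _ _ _
      _ ≤ (1 + δ) * ((1 + δ) * p ^ 2) := by
        apply mul_le_mul haa hzz (Finset.sum_nonneg fun i _ => sq_nonneg _) (by positivity)
      _ = _ := by ring
  have hp' : p ≤ 1 / γ * |xs l| := by
    rw [one_div, inv_mul_eq_div, le_div_iff₀ hγ]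
    linarith
  have hsq : 1 + δ ≤ Real.sqrt (δ ^ 2 + (1 + δ) ^ 2) :=
    Real.le_sqrt_of_sq_le (by nlinarith [sq_nonneg δ])
  calc |u j| ≤ |xs l * ∑ r, a r * b r| + |∑ r, a r * A.mulVec z r| := by
        rw [huj]; exact abs_add_le _ _
    _ ≤ |xs l| * δ + Real.sqrt (δ ^ 2 + (1 + δ) ^ 2) * (1 / γ * |xs l|) := by
        rw [abs_mul]
        gcongr
        exact haz.trans (mul_le_mul hsq hp' hp0 (Real.sqrt_nonneg _))
    _ = _ := by ring
end

section
/- In the OMP-step setting, suppose additionally that δ < 1/2 and that the dominance factor satisfies γ > (δ + √(δ² + (1+δ)²)) / (1 − 2δ). Then |u_l| > |u_j| for every index j ≠ l, where u = Aᵀ A x*; consequently the index of the largest-magnitude entry of u is l, which lies in the support S* of the true sparse signal. -/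
/-!
Write `a = |x_l|` and `b = ‖x_{S* \ {l}}‖`. Polarization of the restricted isometry
inequalities at the `(s+1)`-sparse vectors `t e_j ± x` gives `|u_j - x_j| ≤ δ t` for every
`t > 0` with `‖x‖ ≤ t` (`abs_corr_sub_le`). With the crude choice `t = a + b`, this yields
`|u_l| ≥ a - δ (a + b)` and `|u_j| ≤ b + δ (a + b)` for `j ≠ l`, since `|x_j| ≤ b`. It remains
to see that `(1 + 2δ) b < (1 - 2δ) a`, which follows from `γ b ≤ a` because the bound on `γ` and
`√(δ² + (1+δ)²) ≥ 1 + δ` imply `(1 - 2δ) γ > 1 + 2δ`.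
-/

open Matrix Finset

lemma suppF_single_add_card {N : ℕ} (x : Fin N → ℝ) (j : Fin N) (t c : ℝ) :
    (suppF (Pi.single j t + c • x)).card ≤ (suppF x).card + 1 := by
  refine (Finset.card_le_card (t := insert j (suppF x)) ?_).trans (Finset.card_insert_le _ _)
  intro i hi
  by_cases hij : i = j
  · simp [hij]
  · simp only [suppF, Finset.mem_filter, Finset.mem_univ, true_and, Finset.mem_insert] at hi ⊢
    right
    intro hx
    simp [hij, hx] at hi

lemma sum_sq_single_add {N : ℕ} (x : Fin N → ℝ) (j : Fin N) (t c : ℝ) :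
    ∑ i, (Pi.single j t + c • x : Fin N → ℝ) i ^ 2 =
      t ^ 2 + 2 * t * c * x j + c ^ 2 * ∑ i, x i ^ 2 := by
  have h : ∀ i, (Pi.single j t + c • x : Fin N → ℝ) i ^ 2 =
      (if i = j then t ^ 2 + 2 * t * c * x j else 0) + c ^ 2 * x i ^ 2 := by
    intro i
    by_cases hij : i = j
    · subst hij; simp; ring
    · simp [hij]; ring
  simp only [h, Finset.sum_add_distrib, ← Finset.mul_sum]
  simp

lemma sum_sq_mulVec_single_add {m N : ℕ} (A : Matrix (Fin m) (Fin N) ℝ) (x : Fin N → ℝ)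
    (j : Fin N) (t c : ℝ) :
    ∑ r, (A.mulVec (Pi.single j t + c • x) r) ^ 2 =
      t ^ 2 * ∑ r, A r j ^ 2 + 2 * t * c * Aᵀ.mulVec (A.mulVec x) j
        + c ^ 2 * ∑ r, (A.mulVec x r) ^ 2 := by
  have h : Aᵀ.mulVec (A.mulVec x) j = ∑ r, A r j * A.mulVec x r := rfl
  rw [h, Finset.mul_sum, Finset.mul_sum, Finset.mul_sum, ← Finset.sum_add_distrib,
    ← Finset.sum_add_distrib]
  refine Finset.sum_congr rfl fun r _ => ?_
  simp [Matrix.mulVec_add, Matrix.mulVec_smul]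
  ring

/-- Under the restricted isometry property, each entry of `Aᵀ A x` is within `δ t` of the
corresponding entry of `x`, for any positive upper bound `t` of `‖x‖`. -/
lemma abs_corr_sub_le {m N s : ℕ} (A : Matrix (Fin m) (Fin N) ℝ) (δ : ℝ) (hδ0 : 0 ≤ δ)
    (hRIP : ∀ v : Fin N → ℝ, (suppF v).card ≤ s + 1 →
      (1 - δ) * (∑ i, v i ^ 2) ≤ (∑ r, (A.mulVec v r) ^ 2) ∧
      (∑ r, (A.mulVec v r) ^ 2) ≤ (1 + δ) * (∑ i, v i ^ 2))
    (x : Fin N → ℝ) (hx : (suppF x).card ≤ s) (t : ℝ) (ht : 0 < t)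
    (hxt : ∑ i, x i ^ 2 ≤ t ^ 2) (j : Fin N) :
    |Aᵀ.mulVec (A.mulVec x) j - x j| ≤ δ * t := by
  have hp := hRIP (Pi.single j t + (1 : ℝ) • x)
    ((suppF_single_add_card x j t 1).trans (by omega))
  have hm := hRIP (Pi.single j t + (-1 : ℝ) • x)
    ((suppF_single_add_card x j t (-1)).trans (by omega))
  rw [sum_sq_single_add, sum_sq_mulVec_single_add] at hp hm
  have hδx := mul_le_mul_of_nonneg_left hxt hδ0
  obtain ⟨hp1, hp2⟩ := hp
  obtain ⟨hm1, hm2⟩ := hm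
  rw [abs_le]
  constructor
  · refine le_of_mul_le_mul_left ?_ ht
    linarith
  · refine le_of_mul_le_mul_left ?_ ht
    linarith

/-- OMP step: if `δ < 1/2` and `γ > (δ + √(δ² + (1+δ)²)) / (1 - 2δ)`, then
`|u_l| > |u_j|` for every `j ≠ l`; consequently the index of the largest-magnitude
entry of `u` is `l`, which lies in the support `S*` of the true sparse signal. -/
theorem stmt19 (m N s : ℕ) (hs : 1 ≤ s) (A : Matrix (Fin m) (Fin N) ℝ) (δ γ : ℝ)
    (hδ0 : 0 ≤ δ) (hδ1 : δ < 1) (hγ : 0 < γ)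
    (hRIP : ∀ v : Fin N → ℝ, (suppF v).card ≤ s + 1 →
      (1 - δ) * (∑ i, v i ^ 2) ≤ (∑ r, (A.mulVec v r) ^ 2) ∧
      (∑ r, (A.mulVec v r) ^ 2) ≤ (1 + δ) * (∑ i, v i ^ 2))
    (xs : Fin N → ℝ) (hxs : (suppF xs).card ≤ s) (hxsne : xs ≠ 0)
    (u : Fin N → ℝ) (hu : ∀ j, u j = Aᵀ.mulVec (A.mulVec xs) j)
    (l : Fin N) (hl : ∀ i, |xs i| ≤ |xs l|)
    (hdom : γ * pnorm ((suppF xs).erase l) xs ≤ |xs l|)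
    (hδhalf : δ < 1 / 2)
    (hγbig : γ > (δ + Real.sqrt (δ ^ 2 + (1 + δ) ^ 2)) / (1 - 2 * δ)) :
    (∀ j, j ≠ l → |u j| < |u l|) ∧ l ∈ suppF xs := by
  have hal : 0 < |xs l| := by
    obtain ⟨i, hi⟩ := Function.ne_iff.mp hxsne
    exact (abs_pos.mpr hi).trans_le (hl i)
  have hlS : l ∈ suppF xs := by
    simpa [suppF] using hal
  refine ⟨fun j hj => ?_, hlS⟩
  set b := pnorm ((suppF xs).erase l) xs with hb
  have hb0 : 0 ≤ b := Real.sqrt_nonneg _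
  have hbsq : b ^ 2 = ∑ i ∈ (suppF xs).erase l, xs i ^ 2 :=
    Real.sq_sqrt (Finset.sum_nonneg fun i _ => sq_nonneg _)
  have hsum : ∑ i, xs i ^ 2 = |xs l| ^ 2 + b ^ 2 := by
    rw [hbsq, sq_abs, Finset.add_sum_erase _ (fun i => xs i ^ 2) hlS]
    symm
    refine Finset.sum_subset (Finset.subset_univ _) fun i _ hi => ?_
    simpa [suppF] using hi
  have hxj : |xs j| ≤ b := by
    by_cases h0 : xs j = 0
    · simpa [h0] using hb0
    · refine abs_le_of_sq_le_sq ?_ hb0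
      rw [hbsq]
      exact Finset.single_le_sum (f := fun i => xs i ^ 2) (fun i _ => sq_nonneg _)
        (by simp [suppF, hj, h0])
  have key : ∀ k, |u k - xs k| ≤ δ * (|xs l| + b) := fun k => by
    rw [hu k]
    refine abs_corr_sub_le A δ hδ0 hRIP xs hxs _ (by linarith) ?_ k
    rw [hsum]
    nlinarith [mul_nonneg hal.le hb0]
  have hsqrt : 1 + δ ≤ Real.sqrt (δ ^ 2 + (1 + δ) ^ 2) :=
    Real.le_sqrt_of_sq_le (by nlinarith [sq_nonneg δ])
  have hγ' : 1 + 2 * δ < γ * (1 - 2 * δ) := by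
    have := (div_lt_iff₀ (by linarith)).mp hγbig
    linarith
  have hfin : (1 + 2 * δ) * b < (1 - 2 * δ) * |xs l| := by
    rcases hb0.eq_or_lt with h0 | h0
    · rw [← h0, mul_zero]
      exact mul_pos (by linarith) hal
    · calc (1 + 2 * δ) * b < γ * (1 - 2 * δ) * b := mul_lt_mul_of_pos_right hγ' h0
        _ = (1 - 2 * δ) * (γ * b) := by ring
        _ ≤ (1 - 2 * δ) * |xs l| := mul_le_mul_of_nonneg_left hdom (by linarith)
  have h1 : |u j| - |xs j| ≤ |u j - xs j| := abs_sub_abs_le_abs_sub _ _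
  have h2 : |xs l| - |u l| ≤ |u l - xs l| := by
    rw [abs_sub_comm]
    exact abs_sub_abs_le_abs_sub _ _
  linarith [key j, key l]
end
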